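/- Let L be a link in the interior of a solid torus T and let D₀, …, D_{m−1} be a cyclically ordered pairwise disjoint collection of meridional discs in T, each intersecting L transversally in exactly n points, with chambers Cᵢ bounded by consecutive discs, and assume N(L ∩ Cᵢ, Cᵢ) ≥ n for each i. Let D′ be an embedded disc in the interior of T with D′ ∩ (⋃ᵢ Dᵢ) = ∂D′. Then ∂D′ lies in some disc Dᵢ; and if D″ denotes the subdisc of Dᵢ bounded by ∂D′, then |L ∩ D′| ≥ |L ∩ D″|. -/

import Mathlib

open Set Topology unitInterval

noncomputable section

/-- The closed unit 2-disc `B²` in the complex plane. -/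
abbrev Disc2 : Set ℂ := Metric.closedBall 0 1

variable {X : Type} [TopologicalSpace X] {Y : Type} [TopologicalSpace Y]

/-- A simple closed curve: a subset homeomorphic to the circle. -/
def IsSimpleClosedCurve (A : Set X) : Prop := Nonempty (↥A ≃ₜ Circle)

/-- An arc: a subset homeomorphic to the unit interval. -/
def IsArc (A : Set X) : Prop := Nonempty (↥A ≃ₜ unitInterval)

/-- A link: a finite disjoint union of simple closed curves. -/
def IsLink (L : Set X) : Prop :=
  ∃ (k : ℕ) (c : Fin k → Set X), (∀ i, IsSimpleClosedCurve (c i)) ∧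
    (Pairwise fun i j => Disjoint (c i) (c j)) ∧ L = ⋃ i, c i

/-- `A` is null-homotopic inside the subset `Y`: `A ⊆ Y` and the inclusion of `A`
into `Y` is homotopic to a constant map. -/
def NullHomotopicIn (A Y : Set X) : Prop :=
  ∃ (h : A ⊆ Y) (y : ↥Y),
    (⟨Set.inclusion h, continuous_inclusion h⟩ : C(↥A, ↥Y)).Homotopic
      (ContinuousMap.const _ y)

/-- Two simple closed curves `A` and `B` are isotopic within the subset `Y`:
there is a continuous one-parameter family of embedded circles in `Y`
starting at a parametrization of `A` and ending at one of `B`. -/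
def IsotopicCirclesIn (Y A B : Set X) : Prop :=
  ∃ H : C(Circle × unitInterval, X),
    (∀ t, Function.Injective fun s => H (s, t)) ∧
    (∀ s t, H (s, t) ∈ Y) ∧
    (Set.range fun s => H (s, 0)) = A ∧
    (Set.range fun s => H (s, 1)) = B

/-- A solid torus in `X`: a subset together with a homeomorphism to `B² × S¹`. -/
structure SolidTorus (X : Type) [TopologicalSpace X] where
  carrier : Set X
  homeo : ↥carrier ≃ₜ ↥Disc2 × Circle

namespace SolidTorus

variable (T : SolidTorus X)

/-- The boundary torus `∂T`, corresponding to `∂B² × S¹`. -/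
def bdry : Set X := Subtype.val '' (T.homeo ⁻¹' {p | ‖(p.1 : ℂ)‖ = 1})

/-- The (manifold) interior of the solid torus, corresponding to `int B² × S¹`. -/
def intr : Set X := Subtype.val '' (T.homeo ⁻¹' {p | ‖(p.1 : ℂ)‖ < 1})

/-- The standard meridian curve `∂B² × {1}` on the boundary of the solid torus. -/
def meridianCurve : Set X :=
  Subtype.val '' (T.homeo ⁻¹' {p | ‖(p.1 : ℂ)‖ = 1 ∧ p.2 = 1})

/-- The core circle `{0} × S¹` of the solid torus. -/
def core : Set X := Subtype.val '' (T.homeo ⁻¹' {p | (p.1 : ℂ) = 0})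

end SolidTorus

/-- A meridional disc of a solid torus `T`: an embedded disc `D ⊆ T` with
`D ∩ ∂T = ∂D` and with `∂D` isotopic in `∂T` to the meridian `∂B² × {pt}`. -/
structure MeridionalDisc (T : SolidTorus X) where
  carrier : Set X
  subset : carrier ⊆ T.carrier
  homeo : ↥carrier ≃ₜ ↥Disc2
  bdry : Set X
  bdry_spec : bdry = Subtype.val '' (homeo ⁻¹' {p | ‖(p : ℂ)‖ = 1})
  inter_bdry : carrier ∩ T.bdry = bdry
  isotopic_meridian : IsotopicCirclesIn T.bdry bdry T.meridianCurve

/-- The geometric index `N(L, T)` of a subset `L` of a solid torus `T`: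
the minimum over all meridional discs `D` of `T` of the number of points of `L ∩ D`. -/
def geomIndex (L : Set X) (T : SolidTorus X) : ℕ∞ :=
  ⨅ D : MeridionalDisc T, (L ∩ D.carrier).encard

/-- The geometric index of a finite union of disjoint solid tori in `T`:
the geometric index of a core link of the union. -/
def geomIndexTori {k : ℕ} (F : Fin k → SolidTorus X) (T : SolidTorus X) : ℕ∞ :=
  geomIndex (⋃ i, (F i).core) T

/-- The 3-sphere. -/
abbrev S3 : Type := ↥(Metric.sphere (0 : EuclideanSpace ℝ (Fin 4)) 1)

/-- A simple closed curve is an unknot if it bounds an embedded disc. -/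
def IsUnknot (J : Set X) : Prop :=
  ∃ (D : Set X) (e : ↥D ≃ₜ ↥Disc2),
    J = Subtype.val '' (e ⁻¹' {p | ‖(p : ℂ)‖ = 1})

/-- A solid torus is unknotted if its core circle is an unknot. -/
def SolidTorus.Unknotted (T : SolidTorus X) : Prop := IsUnknot T.core

/-- The surface `D` and the set `L` intersect transversally at `x`: in suitable
local coordinates, `D` is the plane `z = 0` and `L` is the `z`-axis. -/
def TransverseAt (D L : Set X) (x : X) : Prop :=
  ∃ (U : Set X) (φ : ↥U ≃ₜ EuclideanSpace ℝ (Fin 3)), IsOpen U ∧ x ∈ U ∧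
    (φ '' {y : ↥U | (y : X) ∈ D}) = {v | v 2 = 0} ∧
    (φ '' {y : ↥U | (y : X) ∈ L}) = {v | v 0 = 0 ∧ v 1 = 0}

/-- `D` meets `L` transversally. -/
def MeetsTransversally (D L : Set X) : Prop := ∀ x ∈ D ∩ L, TransverseAt D L x

/-- `S` separates `A` from `B`: `A` and `B` are disjoint from `S` and no
connected subset of the complement of `S` meets both `A` and `B`. -/
def Separates (S A B : Set X) : Prop :=
  Disjoint A S ∧ Disjoint B S ∧
  ∀ P : Set X, IsPreconnected P → Disjoint P S →
    (P ∩ A).Nonempty → (P ∩ B).Nonempty → False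

/-- Two disjoint embedded tori `A` and `B` are parallel: the compact region they
cobound is homeomorphic to `A × [0,1]`. -/
def ParallelTori (A B : Set X) : Prop :=
  ∃ R : Set X, IsCompact R ∧ A ⊆ R ∧ B ⊆ R ∧ frontier R = A ∪ B ∧
    Nonempty (↥R ≃ₜ ↥A × unitInterval)

/-- A chamber: a subset together with a homeomorphism to `B² × [0,1]`. -/
structure Chamber (X : Type) [TopologicalSpace X] where
  carrier : Set X
  homeo : ↥carrier ≃ₜ ↥Disc2 × unitInterval

namespace Chamber

variable (C : Chamber X)

/-- The top `C_t = B² × {1}` of the chamber. -/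
def top : Set X := Subtype.val '' (C.homeo ⁻¹' {p | p.2 = 1})

/-- The bottom `C_b = B² × {0}` of the chamber. -/
def bot : Set X := Subtype.val '' (C.homeo ⁻¹' {p | p.2 = 0})

/-- The boundary `∂C = (∂B² × [0,1]) ∪ (B² × {0,1})` of the chamber. -/
def bdry : Set X :=
  Subtype.val '' (C.homeo ⁻¹' {p | ‖(p.1 : ℂ)‖ = 1 ∨ p.2 = 0 ∨ p.2 = 1})

/-- The side annulus `∂C − (C_t ∪ C_b)`. -/
def sideAnnulus : Set X := C.bdry \ (C.top ∪ C.bot)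

end Chamber

/-- An interior meridional disc of a chamber `C`: an embedded disc
`M ⊆ C − (C_t ∪ C_b)` with `M ∩ ∂C = ∂M` and `∂M` essential
(non null-homotopic) in the annulus `∂C − (C_t ∪ C_b)`. -/
structure InteriorMeridionalDisc (C : Chamber X) where
  carrier : Set X
  subset : carrier ⊆ C.carrier \ (C.top ∪ C.bot)
  homeo : ↥carrier ≃ₜ ↥Disc2
  bdry : Set X
  bdry_spec : bdry = Subtype.val '' (homeo ⁻¹' {p | ‖(p : ℂ)‖ = 1})
  inter_bdry : carrier ∩ C.bdry = bdry
  bdry_sub : bdry ⊆ C.sideAnnulus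
  essential : ¬ NullHomotopicIn bdry C.sideAnnulus

/-- The geometric index `N(L, C)` of a subset `L` of a chamber `C`: the minimum
over all interior meridional discs `M` of `C` of the number of points of `L ∩ M`. -/
def chamberIndex (L : Set X) (C : Chamber X) : ℕ∞ :=
  ⨅ M : InteriorMeridionalDisc C, (L ∩ M.carrier).encard

/-- A spanning arc in a chamber `C`: an embedded arc with one endpoint in the
bottom, the other endpoint in the top, and interior in the interior of `C`. -/
def IsSpanningArc (A : Set X) (C : Chamber X) : Prop :=
  A ⊆ C.carrier ∧ ∃ e : unitInterval ≃ₜ ↥A,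
    ((e 0 : ↥A) : X) ∈ C.bot ∧ ((e 1 : ↥A) : X) ∈ C.top ∧
    ∀ t : unitInterval, t ≠ 0 → t ≠ 1 → ((e t : ↥A) : X) ∈ C.carrier \ C.bdry

/-- An embedded arc in the chamber `C` with both endpoints in the set `F`
(e.g. `F = C.top`) and interior in the interior of `C`. -/
def IsArcWithEndpointsIn (A : Set X) (C : Chamber X) (F : Set X) : Prop :=
  A ⊆ C.carrier ∧ ∃ e : unitInterval ≃ₜ ↥A,
    ((e 0 : ↥A) : X) ∈ F ∧ ((e 1 : ↥A) : X) ∈ F ∧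
    ∀ t : unitInterval, t ≠ 0 → t ≠ 1 → ((e t : ↥A) : X) ∈ C.carrier \ C.bdry

/-- A link in a chamber `C`: a finite disjoint union of arcs with endpoints in
`C_t ∪ C_b` (meeting `∂C` only at their endpoints) and of simple closed curves
in `C − ∂C`. -/
def IsChamberLink (L : Set X) (C : Chamber X) : Prop :=
  ∃ (p q : ℕ) (a : Fin p → Set X) (s : Fin q → Set X),
    (∀ i, IsArcWithEndpointsIn (a i) C (C.top ∪ C.bot)) ∧
    (∀ j, IsSimpleClosedCurve (s j) ∧ s j ⊆ C.carrier \ C.bdry) ∧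
    (Pairwise fun i j => Disjoint (a i) (a j)) ∧
    (Pairwise fun i j => Disjoint (s i) (s j)) ∧
    (∀ i j, Disjoint (a i) (s j)) ∧
    L = (⋃ i, a i) ∪ ⋃ j, s j

/-- A clasp in a chamber `C`: a link `A ∪ B ∪ S` of geometric index 2 in `C`,
where `A` is an arc with both endpoints in `C_t`, `B` is an arc with both
endpoints in `C_b`, and `S` is a possibly empty union of simple closed curves
in `C − ∂C`. -/
def IsClasp (K : Set X) (C : Chamber X) : Prop :=
  ∃ A B S : Set X,
    IsArcWithEndpointsIn A C C.top ∧ IsArcWithEndpointsIn B C C.bot ∧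
    (∃ (q : ℕ) (s : Fin q → Set X), (∀ j, IsSimpleClosedCurve (s j) ∧
        s j ⊆ C.carrier \ C.bdry) ∧
      (Pairwise fun i j => Disjoint (s i) (s j)) ∧ S = ⋃ j, s j) ∧
    Disjoint A B ∧ Disjoint A S ∧ Disjoint B S ∧
    K = A ∪ B ∪ S ∧ chamberIndex K C = 2

/-- A system of `m` cyclically ordered pairwise disjoint meridional discs in a
solid torus `T`, cutting `T` into `m` chambers, the `i`-th chamber lying between
the consecutive discs `D_i` (its bottom) and `D_{i+1 mod m}` (its top). -/
structure ChamberSystem (T : SolidTorus X) (m : ℕ) where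
  disc : Fin m → MeridionalDisc T
  disc_disjoint : Pairwise fun i j => Disjoint (disc i).carrier (disc j).carrier
  chamber : Fin m → Chamber X
  chamber_sub : ∀ i, (chamber i).carrier ⊆ T.carrier
  bot_eq : ∀ i, (chamber i).bot = (disc i).carrier
  top_eq : ∀ i, (chamber i).top = (disc (finRotate m i)).carrier
  cover : (⋃ i, (chamber i).carrier) = T.carrier
  overlap : ∀ i j, i ≠ j →
    (chamber i).carrier ∩ (chamber j).carrier ⊆ ⋃ k, (disc k).carrier

/-- Each meridional disc of the system meets `L` transversally in exactly `n` points. -/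
def ChamberSystem.Transversal {T : SolidTorus X} {m : ℕ} (S : ChamberSystem T m)
    (L : Set X) (n : ℕ) : Prop :=
  ∀ i, MeetsTransversally (S.disc i).carrier L ∧
    (L ∩ (S.disc i).carrier).encard = n

/-- The winding degree of a self-map of the circle, via a lift along
`t ↦ exp (i t)`. -/
def CircleDegree (f : C(Circle, Circle)) (n : ℤ) : Prop :=
  ∃ F : C(ℝ, ℝ), (∀ t : ℝ, Circle.exp (F t) = f (Circle.exp t)) ∧
    F (2 * Real.pi) = F 0 + n * (2 * Real.pi)

/-- The algebraic index of a simple closed curve `J` in a solid torus `T` is `a`: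
`J ⊆ T` and some (hence, up to sign, any) parametrization of `J`, composed with
the projection of `T ≅ B² × S¹` to the `S¹` factor, has winding degree `±a`. -/
def HasAlgIndex (J : Set X) (T : SolidTorus X) (a : ℕ) : Prop :=
  ∃ (hJ : J ⊆ T.carrier) (e : Circle ≃ₜ ↥J) (n : ℤ),
    CircleDegree ⟨fun s => (T.homeo (Set.inclusion hJ (e s))).2,
      continuous_snd.comp (T.homeo.continuous.comp
        ((continuous_inclusion hJ).comp e.continuous))⟩ n ∧ a = n.natAbs

/-- The determinant `det (1 + A)` is a fixed linear combination of the determinants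
`det (1 + t • A)` for finitely many arbitrarily small positive `t`. -/
theorem exists_det_one_add_eq_sum (E : Type*) [NormedAddCommGroup E] [NormedSpace ℝ E]
    [FiniteDimensional ℝ E] {δ : ℝ} (hδ : 0 < δ) :
    ∃ (s : Finset ℝ) (w : ℝ → ℝ), (∀ t ∈ s, 0 < t ∧ t < δ) ∧
      ∀ A : E →L[ℝ] E, (1 + A).det = ∑ t ∈ s, w t * (1 + t • A).det := by
  classical
  obtain ⟨s, hs, hcard⟩ := (Set.Ioo_infinite hδ).exists_subset_card_eq
    (Module.finrank ℝ E + 1)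
  refine ⟨s, fun t => (Lagrange.basis s id t).eval 1, fun t ht => hs ht, fun A => ?_⟩
  let b := Module.finBasis ℝ E
  let M := LinearMap.toMatrix b b (A : E →ₗ[ℝ] E)
  let f : Polynomial ℝ :=
    Matrix.det ((Polynomial.X : Polynomial ℝ) • M.map Polynomial.C +
      (1 : Matrix _ _ ℝ).map Polynomial.C)
  have hf : ∀ t : ℝ, f.eval t = (1 + t • A).det := by
    intro t
    have : (1 + t • A).det = (1 + t • M).det := by
      rw [ContinuousLinearMap.det, ← LinearMap.det_toMatrix b]
      congr 1
      simp only [M, ContinuousLinearMap.toLinearMap_add, ContinuousLinearMap.toLinearMap_smul,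
        map_add, map_smul]
      congr 1
      exact LinearMap.toMatrix_one b
    rw [this, ← Polynomial.coe_evalRingHom, RingHom.map_det]
    congr 1
    ext i j
    by_cases hij : i = j <;> simp [hij, add_comm] <;> ring
  have hdeg : f.degree < s.card := by
    rw [hcard]
    refine lt_of_le_of_lt Polynomial.degree_le_natDegree ?_
    have := Polynomial.natDegree_det_X_add_C_le M 1
    rw [Fintype.card_fin] at this
    exact_mod_cast Nat.lt_succ_of_le this
  have hinj : Set.InjOn (id : ℝ → ℝ) s := Function.injective_id.injOn
  have h1 := congrArg (Polynomial.eval 1) (Lagrange.eq_interpolate hinj hdeg)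
  rw [hf, one_smul, Lagrange.interpolate_apply, Polynomial.eval_finsetSum] at h1
  rw [h1]
  refine Finset.sum_congr rfl fun t _ => ?_
  rw [Polynomial.eval_mul, Polynomial.eval_C, id, hf, mul_comm]

/-- The unit sphere of a finite-dimensional inner product space is not the image of a
`C¹` map fixing it pointwise. -/
theorem not_exists_contDiff_retraction_sphere {E : Type*} [NormedAddCommGroup E]
    [InnerProductSpace ℝ E] [FiniteDimensional ℝ E] {r : E → E} (hr : ContDiff ℝ 1 r)
    (hnorm : ∀ x, ‖r x‖ = 1) (hfix : ∀ x, ‖x‖ = 1 → r x = x) : False := by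
  borelize E
  let μ : MeasureTheory.Measure E := MeasureTheory.volume
  let B : Set E := Metric.ball 0 1
  have hv : ContDiff ℝ 1 fun x => r x - x := hr.sub contDiff_id
  obtain ⟨K, hK⟩ := hv.contDiffOn.exists_lipschitzOnWith one_ne_zero
    (convex_closedBall (0 : E) 1) (isCompact_closedBall 0 1)
  let A : E → E →L[ℝ] E := fun x => fderiv ℝ r x - 1
  have hA : ∀ x, HasFDerivAt (fun x => r x - x) (A x) x := fun x =>
    (hr.differentiable one_ne_zero x).hasFDerivAt.sub (hasFDerivAt_id x)
  have hAc : Continuous A := (hr.continuous_fderiv one_ne_zero).sub continuous_const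
  have hdetc : Continuous fun A : E →L[ℝ] E => A.det := ContinuousLinearMap.continuous_det
  obtain ⟨η, hη, hdet⟩ : ∃ η > 0, ∀ L : E →L[ℝ] E, ‖L‖ < η → 0 < (1 + L).det := by
    have h0 : ∀ᶠ L in 𝓝 (0 : E →L[ℝ] E), 0 < (1 + L).det := by
      apply (hdetc.comp (continuous_const.add continuous_id)).continuousAt.eventually_const_lt
      simp [ContinuousLinearMap.det]
    obtain ⟨η, hη, h⟩ := Metric.eventually_nhds_iff.1 h0
    exact ⟨η, hη, fun L hL => h (by simpa using hL)⟩
  obtain ⟨C, hC⟩ := (isCompact_closedBall (0 : E) 1).exists_bound_of_continuousOn hAc.continuousOn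
  have hC0 : 0 ≤ C := (norm_nonneg _).trans (hC 0 (by simp))
  let δ : ℝ := min 1 (min (1 / (K + 1)) (η / (C + 1)))
  have hδ : 0 < δ := by positivity
  obtain ⟨s, w, hs, hw⟩ := exists_det_one_add_eq_sum E hδ
  have hinner : ∀ t : ℝ, MeasureTheory.IntegrableOn (fun x => (1 + t • A x).det) B μ := by
    intro t
    apply MeasureTheory.IntegrableOn.mono_set _ (Metric.ball_subset_closedBall)
    exact (hdetc.comp (continuous_const.add
      (hAc.const_smul t))).continuousOn.integrableOn_compact (isCompact_closedBall 0 1)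
  have key : ∀ t ∈ s, ∫ x in B, (1 + t • A x).det ∂μ = μ.real B := by
    intro t ht
    obtain ⟨ht0, htδ⟩ := hs t ht
    have ht1 : t < 1 := htδ.trans_le (min_le_left _ _)
    have htK : t * K < 1 := by
      have h := htδ.trans_le ((min_le_right _ _).trans (min_le_left _ _))
      rw [lt_div_iff₀ (by positivity)] at h
      nlinarith
    have htC : t * C < η := by
      have h := htδ.trans_le ((min_le_right _ _).trans (min_le_right _ _))
      rw [lt_div_iff₀ (by positivity)] at h
      nlinarith
    let f : E → E := fun x => x + t • (r x - x)
    have hf' : ∀ x, HasFDerivAt f (1 + t • A x) x := fun x =>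
      (hasFDerivAt_id x).add ((hA x).const_smul t)
    have happ : ApproximatesLinearOn f (ContinuousLinearEquiv.refl ℝ E : E →L[ℝ] E)
        (Metric.closedBall 0 1) (t.toNNReal * K) := by
      intro x hx y hy
      have h := hK.dist_le_mul x hx y hy
      have e : f x - f y - (ContinuousLinearEquiv.refl ℝ E : E →L[ℝ] E) (x - y) =
          t • ((r x - x) - (r y - y)) := by
        simp only [f, ContinuousLinearEquiv.coe_refl, ContinuousLinearMap.coe_id', id]
        module
      rw [e, norm_smul, Real.norm_of_nonneg ht0.le, ← dist_eq_norm]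
      rw [dist_eq_norm x y] at h
      calc t * dist (r x - x) (r y - y) ≤ t * (K * ‖x - y‖) := by gcongr
        _ = _ := by rw [NNReal.coe_mul, Real.coe_toNNReal _ ht0.le]; ring
    have hc : Subsingleton E ∨ t.toNNReal * K <
        ‖((ContinuousLinearEquiv.refl ℝ E).symm : E →L[ℝ] E)‖₊⁻¹ := by
      rcases subsingleton_or_nontrivial E with h | h
      · exact Or.inl h
      · right
        have : ‖((ContinuousLinearEquiv.refl ℝ E).symm : E →L[ℝ] E)‖₊ = 1 := by
          simp [ContinuousLinearMap.nnnorm_id]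
        rw [this, inv_one]
        rw [← NNReal.coe_lt_coe, NNReal.coe_mul, Real.coe_toNNReal _ ht0.le]
        exact htK
    have hinj : InjOn f (Metric.closedBall 0 1) := happ.injOn hc
    have hopen : IsOpen (f '' B) := by
      apply (happ.mono_set Metric.ball_subset_closedBall).open_image
        (ContinuousLinearEquiv.toNonlinearRightInverse _) Metric.isOpen_ball
      simpa [ContinuousLinearEquiv.toNonlinearRightInverse] using hc
    have hfB : ∀ x ∈ B, f x ∈ B := by
      intro x hx
      have hx' : ‖x‖ < 1 := by simpa [B] using hx
      have : f x = (1 - t) • x + t • r x := by simp only [f]; module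
      have h2 : ‖f x‖ < 1 := by
        rw [this]
        calc ‖(1 - t) • x + t • r x‖ ≤ ‖(1 - t) • x‖ + ‖t • r x‖ := norm_add_le _ _
          _ = (1 - t) * ‖x‖ + t := by
            rw [norm_smul, norm_smul, hnorm, Real.norm_of_nonneg ht0.le,
              Real.norm_of_nonneg (by linarith), mul_one]
          _ < 1 := by nlinarith
      simpa [B] using h2
    have himg : f '' B = B := by
      apply Subset.antisymm
      · rintro _ ⟨x, hx, rfl⟩; exact hfB x hx
      · apply (convex_ball (0 : E) 1).isPreconnected.subset_of_closure_inter_subset hopen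
        · exact ⟨f 0, hfB 0 (by simp [B]), 0, by simp [B], rfl⟩
        · rintro y ⟨hy, hyB⟩
          have hcpt : IsCompact (f '' Metric.closedBall 0 1) :=
            (isCompact_closedBall 0 1).image
              (continuous_iff_continuousAt.2 fun x => (hf' x).continuousAt)
          have hsub : closure (f '' B) ⊆ f '' Metric.closedBall 0 1 :=
            closure_minimal (image_mono Metric.ball_subset_closedBall) hcpt.isClosed
          obtain ⟨x, hx, rfl⟩ := hsub hy
          by_cases hx1 : ‖x‖ = 1
          · have : f x = x := by simp [f, hfix x hx1]
            rw [this] at hyB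
            simp [hx1] at hyB
          · refine ⟨x, ?_, rfl⟩
            have : ‖x‖ ≤ 1 := by simpa using hx
            simpa [B] using lt_of_le_of_ne this hx1
    have hcv := MeasureTheory.integral_image_eq_integral_abs_det_fderiv_smul μ
      (Metric.isOpen_ball (x := (0 : E)) (ε := 1)).measurableSet
      (fun x _ => (hf' x).hasFDerivWithinAt) (hinj.mono Metric.ball_subset_closedBall)
      (fun _ => (1 : ℝ))
    have himg' : f '' Metric.ball 0 1 = B := himg
    rw [himg'] at hcv
    have hl : ∫ x in B, (1 : ℝ) ∂μ = μ.real B := by simp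
    rw [← hl, hcv]
    refine MeasureTheory.setIntegral_congr_fun Metric.isOpen_ball.measurableSet fun x hx => ?_
    have hpos : 0 < (1 + t • A x).det := by
      apply hdet
      rw [norm_smul, Real.norm_of_nonneg ht0.le]
      exact (mul_le_mul_of_nonneg_left (hC x (Metric.ball_subset_closedBall hx)) ht0.le).trans_lt
        htC
    simp [abs_of_pos hpos]
  have hwsum : ∑ t ∈ s, w t = 1 := by
    have := hw 0
    simpa [ContinuousLinearMap.det] using this.symm
  have hzero : ∀ x, (1 + A x).det = 0 := by
    intro x
    have e : 1 + A x = fderiv ℝ r x := by simp [A]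
    rw [e]
    by_contra hne
    have hsurj : Function.Surjective (fderiv ℝ r x) := by
      have hu : IsUnit (LinearMap.det (fderiv ℝ r x : E →ₗ[ℝ] E)) := isUnit_iff_ne_zero.2 hne
      intro y
      obtain ⟨v, hv⟩ := (LinearMap.equivOfIsUnitDet hu).surjective y
      exact ⟨v, by rw [← hv, LinearMap.equivOfIsUnitDet_apply]; rfl⟩
    obtain ⟨v, hv⟩ := hsurj (r x)
    have hd := ((hr.differentiable one_ne_zero x).hasFDerivAt).norm_sq
    have hc : HasFDerivAt (fun y => ‖r y‖ ^ 2) (0 : E →L[ℝ] ℝ) x := by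
      simpa [hnorm] using hasFDerivAt_const (1 : ℝ) x
    have h0 := DFunLike.congr_fun (hd.unique hc) v
    simp [hv, hnorm] at h0
  have hfin : (0 : ℝ) = μ.real B := by
    calc (0 : ℝ) = ∫ x in B, (1 + A x).det ∂μ := by simp [hzero]
      _ = ∫ x in B, ∑ t ∈ s, w t * (1 + t • A x).det ∂μ := by
        congr 1; funext x; exact hw (A x)
      _ = ∑ t ∈ s, w t * ∫ x in B, (1 + t • A x).det ∂μ := by
        rw [MeasureTheory.integral_finsetSum _ fun t _ => (hinner t).const_mul (w t)]
        simp_rw [MeasureTheory.integral_const_mul]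
      _ = ∑ t ∈ s, w t * μ.real B := Finset.sum_congr rfl fun t ht => by rw [key t ht]
      _ = μ.real B := by rw [← Finset.sum_mul, hwsum, one_mul]
  have hBpos : 0 < μ.real B :=
    ENNReal.toReal_pos (Metric.measure_ball_pos μ 0 one_pos).ne' MeasureTheory.measure_ball_lt_top.ne
  exact hBpos.ne hfin

/-- A continuous map of the closed unit ball which moves points by at most `1/2` has a zero. -/
theorem exists_zero_of_norm_sub_le {E : Type*} [NormedAddCommGroup E] [InnerProductSpace ℝ E]
    [FiniteDimensional ℝ E] {h : E → E} (hc : ContinuousOn h (Metric.closedBall 0 1))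
    (hh : ∀ x, ‖x‖ ≤ 1 → ‖h x - x‖ ≤ 1 / 2) : ∃ x, ‖x‖ ≤ 1 ∧ h x = 0 := by
  by_contra! hne
  obtain ⟨k, hk⟩ := ContinuousMap.exists_restrict_eq Metric.isClosed_closedBall
    ⟨_, hc.domRestrict⟩
  have hkh : ∀ x, ‖x‖ ≤ 1 → k x = h x := fun x hx =>
    DFunLike.congr_fun hk ⟨x, by simpa using hx⟩
  obtain ⟨δ, hδ, hδh⟩ := (isCompact_closedBall (0 : E) 1).exists_forall_le' (a := 0)
    k.continuous.norm.continuousOn (fun x hx => by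
      have hx' : ‖x‖ ≤ 1 := by simpa using hx
      simpa [hkh x hx'] using hne x hx')
  obtain ⟨g, hg, hgk, -⟩ := k.continuous.exists_contDiff_approx 1
    (ε := fun _ => min δ (1 / 4)) continuous_const (fun _ => by positivity)
  let χ : ContDiffBump (0 : E) := ⟨7 / 8, 1, by norm_num, by norm_num⟩
  let q : E → E := fun x => x + χ x • (g x - x)
  have hq : ContDiff ℝ 1 q := contDiff_id.add (χ.contDiff.smul (hg.sub contDiff_id))
  have hout : ∀ x, 1 ≤ ‖x‖ → q x = x := by
    intro x hx
    have : χ x = 0 := χ.zero_of_le_dist (by simpa [χ] using hx)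
    simp [q, this]
  have hq0 : ∀ x, q x ≠ 0 := by
    intro x
    rcases le_or_gt ‖x‖ (7 / 8) with hx | hx
    · have h1 : χ x = 1 := χ.one_of_mem_closedBall (by simpa [χ] using hx)
      have hx1 : ‖x‖ ≤ 1 := by linarith
      intro h0
      have hg0 : g x = 0 := by simpa [q, h1] using h0
      have h2 := hgk x
      have h3 := hδh x (by simpa using hx1)
      rw [hg0, dist_zero_left] at h2
      linarith [h2.trans_le (min_le_left _ _)]
    · rcases le_or_gt 1 ‖x‖ with hx1 | hx1
      · rw [hout x hx1]
        exact norm_pos_iff.1 (by linarith)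
      · intro h0
        have h1 : x = -(χ x • (g x - x)) := eq_neg_of_add_eq_zero_left h0
        have h2 : ‖g x - x‖ ≤ 3 / 4 := by
          have h3 := (hgk x).trans_le (min_le_right _ _)
          have h4 := hh x hx1.le
          rw [← hkh x hx1.le, ← dist_eq_norm] at h4
          rw [← dist_eq_norm]
          linarith [dist_triangle (g x) (k x) x]
        have h5 : ‖x‖ ≤ 3 / 4 := by
          rw [h1, norm_neg, norm_smul, Real.norm_of_nonneg χ.nonneg]
          nlinarith [χ.le_one (x := x), χ.nonneg (x := x), norm_nonneg (g x - x)]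
        linarith
  refine not_exists_contDiff_retraction_sphere (r := fun x => ‖q x‖⁻¹ • q x)
    (((hq.norm ℝ hq0).inv fun x => norm_ne_zero_iff.2 (hq0 x)).smul hq) (fun x => ?_)
    (fun x hx => ?_)
  · rw [norm_smul, norm_inv, norm_norm, inv_mul_cancel₀ (norm_ne_zero_iff.2 (hq0 x))]
  · simp [hout x hx.ge, hx]

/-- An injective continuous map of the closed unit ball sends the centre to an interior point of
its image. -/
theorem image_closedBall_mem_nhds_of_injOn {E : Type*} [NormedAddCommGroup E]
    [InnerProductSpace ℝ E] [FiniteDimensional ℝ E] {f : E → E}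
    (hc : ContinuousOn f (Metric.closedBall 0 1)) (hinj : InjOn f (Metric.closedBall 0 1)) :
    f '' Metric.closedBall 0 1 ∈ 𝓝 (f 0) := by
  borelize E
  by_contra hnhds
  have : CompactSpace (Metric.closedBall (0 : E) 1) :=
    isCompact_iff_compactSpace.1 (isCompact_closedBall 0 1)
  have hemb : IsClosedEmbedding ((Metric.closedBall (0 : E) 1).domRestrict f) :=
    hc.domRestrict.isClosedEmbedding hinj.injective
  obtain ⟨G, hG⟩ := ContinuousMap.exists_extension hemb
    (⟨Subtype.val, continuous_subtype_val⟩ : C(Metric.closedBall (0 : E) 1, E))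
  have hGf : ∀ x, ‖x‖ ≤ 1 → G (f x) = x := fun x hx =>
    DFunLike.congr_fun hG ⟨x, by simpa using hx⟩
  have hG0 : G (f 0) = 0 := hGf 0 (by simp)
  obtain ⟨ε, hε, hGε⟩ : ∃ ε > 0, ∀ y, dist y (f 0) < 2 * ε → ‖G y‖ ≤ 1 / 10 := by
    obtain ⟨ε, hε, h⟩ := Metric.continuousAt_iff.1 (G.continuous.continuousAt (x := f 0))
      (1 / 10) (by norm_num)
    refine ⟨ε / 2, by positivity, fun y hy => ?_⟩
    have := h (x := y) (by linarith)
    rw [hG0, dist_zero_right] at this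
    exact this.le
  obtain ⟨c, hcK, hcε⟩ : ∃ c, c ∉ f '' Metric.closedBall 0 1 ∧ dist c (f 0) < ε := by
    by_contra! hcon
    refine hnhds (Filter.mem_of_superset (Metric.ball_mem_nhds _ hε) fun y hy => ?_)
    by_contra hy'
    exact (hcon y hy').not_gt hy
  have hcK' : ∀ x, ‖x‖ ≤ 1 → f x - c ≠ 0 := fun x hx h0 =>
    hcK ⟨x, by simpa using hx, sub_eq_zero.1 h0⟩
  have hcpt : IsCompact (f '' Metric.closedBall 0 1 ∩ {y | ε ≤ ‖y - c‖}) :=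
    ((isCompact_closedBall 0 1).image_of_continuousOn hc).inter_right
      (isClosed_le continuous_const (continuous_id.sub continuous_const).norm)
  obtain ⟨δ₀, hδ₀, hδG⟩ := hcpt.exists_forall_le' (a := 0)
    G.continuous.norm.continuousOn (by
      rintro _ ⟨⟨x, hx, rfl⟩, hxε⟩
      have hx' : ‖x‖ ≤ 1 := by simpa using hx
      rw [hGf x hx', norm_pos_iff]
      rintro rfl
      rw [dist_comm, dist_eq_norm] at hcε
      exact (show ε ≤ ‖f 0 - c‖ from hxε).not_gt hcε)
  let δ : ℝ := min δ₀ (1 / 10)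
  have hδ : 0 < δ := by positivity
  obtain ⟨P, hP, hPG, -⟩ := G.continuous.exists_contDiff_approx 1
    (ε := fun _ => δ / 2) continuous_const (fun _ => by positivity)
  obtain ⟨v, hv, hvP⟩ : ∃ v, ‖v‖ < δ / 2 ∧ v ∉ P '' Metric.sphere c ε := by
    by_contra! hcon
    have h0 : MeasureTheory.volume (P '' Metric.sphere c ε) = 0 :=
      MeasureTheory.addHaar_image_eq_zero_of_differentiableOn_of_addHaar_eq_zero _
        (hP.differentiable one_ne_zero).differentiableOn
        (MeasureTheory.Measure.addHaar_sphere_of_ne_zero _ _ hε.ne')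
    have h1 : Metric.ball (0 : E) (δ / 2) ⊆ P '' Metric.sphere c ε := fun y hy =>
      hcon y (by simpa using hy)
    exact (Metric.measure_ball_pos MeasureTheory.volume (0 : E) (half_pos hδ)).ne'
      (MeasureTheory.measure_mono_null h1 h0)
  have hPv : ∀ y, ‖P y - v - G y‖ < δ := by
    intro y
    have h1 := hPG y
    rw [dist_eq_norm] at h1
    calc ‖P y - v - G y‖ = ‖(P y - G y) - v‖ := by congr 1; abel
      _ ≤ ‖P y - G y‖ + ‖v‖ := norm_sub_le _ _
      _ < δ := by linarith
  let Φ : E → E := fun y => c + max (ε / ‖y - c‖) 1 • (y - c)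
  have hΦfar : ∀ y, y - c ≠ 0 → ε ≤ ‖y - c‖ → Φ y = y := by
    intro y hy0 hy
    have : ε / ‖y - c‖ ≤ 1 := (div_le_one (norm_pos_iff.2 hy0)).2 hy
    simp [Φ, max_eq_right this]
  have hΦnear : ∀ y, y - c ≠ 0 → ‖y - c‖ < ε → Φ y ∈ Metric.sphere c ε := by
    intro y hy0 hy
    have hpos := norm_pos_iff.2 hy0
    have : 1 ≤ ε / ‖y - c‖ := (one_le_div hpos).2 hy.le
    simp [Φ, max_eq_left this, norm_smul, abs_of_pos hε, hpos.ne']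
  obtain ⟨x, hx, hx0⟩ := exists_zero_of_norm_sub_le (h := fun x => P (Φ (f x)) - v) (by
      have hΦ : ContinuousOn (fun x => Φ (f x)) (Metric.closedBall 0 1) := by
        have h1 := hc.sub (continuousOn_const (c := c))
        refine continuousOn_const.add ((ContinuousOn.sup (continuousOn_const.div h1.norm ?_)
          continuousOn_const).smul h1)
        intro x hx
        exact norm_ne_zero_iff.2 (hcK' x (by simpa using hx))
      exact (hP.continuous.comp_continuousOn hΦ).sub continuousOn_const) (by
      intro x hx
      have hδ1 : δ ≤ 1 / 10 := min_le_right _ _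
      rcases le_or_gt ε ‖f x - c‖ with hfar | hnear
      · have h1 := hPv (f x)
        simp only [hΦfar _ (hcK' x hx) hfar]
        rw [hGf x hx] at h1
        linarith
      · have hs := hΦnear _ (hcK' x hx) hnear
        have h1 := hPv (Φ (f x))
        have h2 := hGε (Φ (f x)) (by
          have := dist_triangle (Φ (f x)) c (f 0)
          rw [Metric.mem_sphere] at hs
          linarith)
        have h3 := hGε (f x) (by
          have := dist_triangle (f x) c (f 0)
          rw [dist_eq_norm (f x) c] at this
          linarith)
        rw [hGf x hx] at h3
        calc ‖P (Φ (f x)) - v - x‖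
            = ‖(P (Φ (f x)) - v - G (Φ (f x))) + (G (Φ (f x)) - x)‖ := by congr 1; abel
          _ ≤ ‖P (Φ (f x)) - v - G (Φ (f x))‖ + (‖G (Φ (f x))‖ + ‖x‖) :=
            (norm_add_le _ _).trans (by gcongr; exact norm_sub_le _ _)
          _ ≤ 1 / 2 := by linarith)
  rcases le_or_gt ε ‖f x - c‖ with hfar | hnear
  · have h1 := hPv (f x)
    simp only [hΦfar _ (hcK' x hx) hfar] at hx0
    rw [hx0, zero_sub, norm_neg] at h1
    have h2 := hδG (f x) ⟨⟨x, by simpa using hx, rfl⟩, hfar⟩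
    linarith [min_le_left δ₀ (1 / 10)]
  · exact hvP ⟨_, hΦnear _ (hcK' x hx) hnear, sub_eq_zero.1 hx0⟩

/-- **Invariance of domain**: an injective continuous map between real vector spaces of the same
finite dimension, defined on an open set, has open image. -/
theorem IsOpen.image_of_continuousOn_injOn {E F : Type*} [NormedAddCommGroup E] [NormedSpace ℝ E]
    [FiniteDimensional ℝ E] [NormedAddCommGroup F] [NormedSpace ℝ F] [FiniteDimensional ℝ F]
    (hEF : Module.finrank ℝ E = Module.finrank ℝ F) {U : Set E} (hU : IsOpen U) {f : E → F}
    (hc : ContinuousOn f U) (hinj : InjOn f U) : IsOpen (f '' U) := by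
  let a : E ≃L[ℝ] EuclideanSpace ℝ (Fin (Module.finrank ℝ E)) := toEuclidean
  let b : F ≃L[ℝ] EuclideanSpace ℝ (Fin (Module.finrank ℝ E)) :=
    ContinuousLinearEquiv.ofFinrankEq (by simp [hEF])
  rw [isOpen_iff_mem_nhds]
  rintro _ ⟨x, hx, rfl⟩
  have hUa : IsOpen (a.symm ⁻¹' U) := hU.preimage a.symm.continuous
  obtain ⟨ρ, hρ, hball⟩ := Metric.nhds_basis_closedBall.mem_iff.1
    (hUa.mem_nhds (x := a x) (by simpa using hx))
  let j : EuclideanSpace ℝ (Fin (Module.finrank ℝ E)) → E := fun z => a.symm (a x + ρ • z)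
  have hj : ∀ z ∈ Metric.closedBall (0 : EuclideanSpace ℝ (Fin (Module.finrank ℝ E))) 1,
      j z ∈ U := by
    intro z hz
    apply hball
    have hz' : ‖z‖ ≤ 1 := by simpa using hz
    simp only [Metric.mem_closedBall, dist_self_add_left, norm_smul, Real.norm_of_nonneg hρ.le]
    nlinarith
  have hjc : Continuous j :=
    a.symm.continuous.comp (continuous_const.add (continuous_id.const_smul ρ))
  have hjinj : Function.Injective j := by
    intro z w h
    have := add_left_cancel (a.symm.injective h)
    exact smul_right_injective _ hρ.ne' this
  have h0 : j 0 = x := by simp [j]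
  have key := image_closedBall_mem_nhds_of_injOn (f := fun z => b (f (j z)))
    (b.continuous.comp_continuousOn (hc.comp hjc.continuousOn hj))
    (fun z hz w hw h => hjinj (hinj (hj z hz) (hj w hw) (b.injective h)))
  simp only [h0] at key
  have key2 := b.continuous.continuousAt.preimage_mem_nhds key
  refine Filter.mem_of_superset key2 ?_
  rintro y ⟨z, hz, hzy⟩
  exact ⟨j z, hj z hz, b.injective hzy⟩

/-- The identity map of the circle is not homotopic to a constant map. -/
theorem Circle.not_homotopic_id_const (c : Circle) :
    ¬ (ContinuousMap.id Circle).Homotopic (ContinuousMap.const Circle c) := by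
  intro hH
  obtain ⟨H⟩ := hH.symm
  obtain ⟨a, ha⟩ := Circle.exp_surjective c
  let F := Circle.isCoveringMap_exp.liftHomotopy H.toContinuousMap (ContinuousMap.const Circle a)
    (fun z => by simpa using ha.symm)
  have hF : ∀ z, Circle.exp (F (1, z)) = z := by
    intro z
    have h := congrFun (Circle.isCoveringMap_exp.liftHomotopy_lifts H.toContinuousMap
      (ContinuousMap.const Circle a) (fun z => by simpa using ha.symm)) (1, z)
    exact h.trans (by simp)
  let g : ℝ → ℝ := fun t => F (1, Circle.exp t) - F (1, Circle.exp 0)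
  have hg : Continuous g := by fun_prop
  have hgid : g = id := by
    refine Circle.isCoveringMap_exp.eq_of_comp_eq hg continuous_id ?_ 0 (by simp [g])
    funext t
    simp [g, Circle.exp_sub, hF]
  have h1 : g (2 * Real.pi) = 2 * Real.pi := congrFun hgid _
  have h2 : g (2 * Real.pi) = 0 := by simp [g, Circle.exp_two_pi]
  rw [h2] at h1
  exact Real.two_pi_pos.ne h1

/-- A preconnected set covered by finitely many closed sets which are disjoint on it lies in
one of them. -/
theorem IsPreconnected.exists_subset_of_finite_closed_cover {M ι : Type*} [TopologicalSpace M]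
    [Finite ι] {s : Set M} (hs : IsPreconnected s) (hne : s.Nonempty) {F : ι → Set M}
    (hF : ∀ i, IsClosed (F i)) (hcover : s ⊆ ⋃ i, F i)
    (hdisj : ∀ i j, i ≠ j → s ∩ (F i ∩ F j) = ∅) : ∃ i, s ⊆ F i := by
  obtain ⟨x, hx⟩ := hne
  obtain ⟨i, hi⟩ := mem_iUnion.1 (hcover hx)
  refine ⟨i, fun y hy => ?_⟩
  by_contra hyi
  have hclosed : IsClosed (⋃ j : {j // j ≠ i}, F j) := isClosed_iUnion_of_finite fun j => hF j
  obtain ⟨z, hzs, hzi, hz⟩ := isPreconnected_closed_iff.1 hs _ _ (hF i) hclosed (by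
      intro z hz
      obtain ⟨j, hj⟩ := mem_iUnion.1 (hcover hz)
      by_cases hji : j = i
      · exact Or.inl (hji ▸ hj)
      · exact Or.inr (mem_iUnion.2 ⟨⟨j, hji⟩, hj⟩)) ⟨x, hx, hi⟩ (by
      obtain ⟨j, hj⟩ := mem_iUnion.1 (hcover hy)
      exact ⟨y, hy, mem_iUnion.2 ⟨⟨j, fun h => hyi (h ▸ hj)⟩, hj⟩⟩)
  obtain ⟨⟨j, hj⟩, hzj⟩ := mem_iUnion.1 hz
  exact (hdisj i j (Ne.symm hj)).subset ⟨hzs, hzi, hzj⟩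

/-- Invariance of domain for maps into a space which is locally Euclidean at the image point. -/
theorem image_mem_nhds_of_chart_target {M E F : Type*} [TopologicalSpace M]
    [NormedAddCommGroup E] [NormedSpace ℝ E] [FiniteDimensional ℝ E]
    [NormedAddCommGroup F] [NormedSpace ℝ F] [FiniteDimensional ℝ F]
    (hEF : Module.finrank ℝ F = Module.finrank ℝ E) (e : OpenPartialHomeomorph M E)
    {f : F → M} {U : Set F} (hU : IsOpen U) (hc : ContinuousOn f U) (hinj : InjOn f U)
    {x : F} (hx : x ∈ U) (hfx : f x ∈ e.source) : f '' U ∈ 𝓝 (f x) := by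
  have hV : IsOpen (U ∩ f ⁻¹' e.source) := hc.isOpen_inter_preimage hU e.open_source
  have ho : IsOpen ((fun y => e (f y)) '' (U ∩ f ⁻¹' e.source)) :=
    hV.image_of_continuousOn_injOn hEF
      (e.continuousOn.comp (hc.mono inter_subset_left) fun y hy => hy.2)
      (fun y hy z hz h => hinj hy.1 hz.1 (e.injOn hy.2 hz.2 h))
  have hn := (e.continuousAt hfx).preimage_mem_nhds (ho.mem_nhds ⟨x, ⟨hx, hfx⟩, rfl⟩)
  filter_upwards [hn, e.open_source.mem_nhds hfx] with y hy hys
  obtain ⟨z, hz, hzy⟩ := hy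
  exact ⟨z, hz.1, e.injOn hz.2 hys hzy⟩

/-- Invariance of domain for maps from a space which is locally Euclidean at the point. -/
theorem image_mem_nhds_of_chart_source {M E F : Type*} [TopologicalSpace M]
    [NormedAddCommGroup E] [NormedSpace ℝ E] [FiniteDimensional ℝ E]
    [NormedAddCommGroup F] [NormedSpace ℝ F] [FiniteDimensional ℝ F]
    (hEF : Module.finrank ℝ E = Module.finrank ℝ F) (e : OpenPartialHomeomorph M E)
    {g : M → F} {V : Set M} {p : M} (hV : V ∈ 𝓝 p) (hc : ContinuousOn g V) (hinj : InjOn g V)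
    (hp : p ∈ e.source) : g '' V ∈ 𝓝 (g p) := by
  obtain ⟨O, hOV, hO, hpO⟩ := mem_nhds_iff.1 (Filter.inter_mem hV (e.open_source.mem_nhds hp))
  have hOs : O ⊆ e.source := fun x hx => (hOV hx).2
  have ho : IsOpen ((fun y => g (e.symm y)) '' (e '' O)) := by
    refine (e.isOpen_image_of_subset_source hO hOs).image_of_continuousOn_injOn hEF ?_ ?_
    · refine (hc.mono fun x hx => (hOV hx).1).comp (e.continuousOn_symm.mono ?_) ?_
      · rintro _ ⟨x, hx, rfl⟩; exact e.map_source (hOs hx)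
      · rintro _ ⟨x, hx, rfl⟩; rwa [e.left_inv (hOs hx)]
    · rintro _ ⟨x, hx, rfl⟩ _ ⟨y, hy, rfl⟩ h
      simp only [e.left_inv (hOs hx), e.left_inv (hOs hy)] at h
      rw [hinj (hOV hx).1 (hOV hy).1 h]
  refine Filter.mem_of_superset (ho.mem_nhds ⟨e p, mem_image_of_mem _ hpO, ?_⟩) ?_
  · simp only [e.left_inv hp]
  · rintro _ ⟨_, ⟨x, hx, rfl⟩, rfl⟩
    exact ⟨x, (hOV hx).1, by simp only [e.left_inv (hOs hx)]⟩

/-- The standard cylinder `B² × [0,1]`. -/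
abbrev Cylinder : Type := ↥Disc2 × unitInterval

/-- An injective self-map of the cylinder which pushes points away from the bottom, relative to a
set `A` which it does not push other points into. -/
structure IsBottomPush (A : Set Cylinder) (h : Cylinder → Cylinder) : Prop where
  continuous : Continuous h
  injective : Function.Injective h
  mem_of_mem : ∀ y, h y ∈ A → y ∈ A
  eq_of_zero : ∀ y, (h y).2 = 0 → h y = y
  eq_of_one : ∀ y, (h y).2 = 1 → h y = y
  side_of_side : ∀ y, ‖((h y).1 : ℂ)‖ = 1 → ‖(y.1 : ℂ)‖ = 1
  fst_eq : ∀ y, ‖(y.1 : ℂ)‖ = 1 → (h y).1 = y.1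

namespace IsBottomPush

theorem id (A : Set Cylinder) : IsBottomPush A _root_.id where
  continuous := continuous_id
  injective := Function.injective_id
  mem_of_mem _ h := h
  eq_of_zero _ _ := rfl
  eq_of_one _ _ := rfl
  side_of_side _ h := h
  fst_eq _ _ := rfl

theorem comp {A : Set Cylinder} {g h : Cylinder → Cylinder} (hg : IsBottomPush A g)
    (hh : IsBottomPush A h) : IsBottomPush A (g ∘ h) where
  continuous := hg.continuous.comp hh.continuous
  injective := hg.injective.comp hh.injective
  mem_of_mem y hy := hh.mem_of_mem y (hg.mem_of_mem _ hy)
  eq_of_zero y hy := by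
    have h1 : g (h y) = h y := hg.eq_of_zero _ hy
    have h2 : (h y).2 = 0 := by rw [← h1]; exact hy
    exact h1.trans (hh.eq_of_zero y h2)
  eq_of_one y hy := by
    have h1 : g (h y) = h y := hg.eq_of_one _ hy
    have h2 : (h y).2 = 1 := by rw [← h1]; exact hy
    exact h1.trans (hh.eq_of_one y h2)
  side_of_side y hy := hh.side_of_side y (hg.side_of_side _ hy)
  fst_eq y hy := by
    have h1 := hh.fst_eq y hy
    exact (hg.fst_eq (h y) (by rw [h1]; exact hy)).trans h1

theorem exists_forall_finite {A : Set Cylinder} {F : Set Cylinder} (hF : F.Finite)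
    (hloc : ∀ p ∈ F, ∃ h, IsBottomPush A h ∧ (h p).2 ≠ 0) :
    ∃ h, IsBottomPush A h ∧ ∀ p ∈ F, (h p).2 ≠ 0 := by
  induction F, hF using Set.Finite.induction_on with
  | empty => exact ⟨_root_.id, IsBottomPush.id A, by simp⟩
  | @insert p F _ _ ih =>
    obtain ⟨h, hh, hhF⟩ := ih fun q hq => hloc q (mem_insert_of_mem _ hq)
    obtain ⟨g, hg, hgp⟩ := hloc p (mem_insert _ _)
    refine ⟨g ∘ h, hg.comp hh, ?_⟩
    intro q hq h0
    have h1 : g (h q) = h q := hg.eq_of_zero _ h0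
    have h2 : (h q).2 = 0 := by rw [← h1]; exact h0
    rcases hq with rfl | hq
    · have h3 := hh.eq_of_zero _ h2
      simp only [Function.comp, h3] at h0
      exact hgp h0
    · exact hhF q hq h2

/-- A push which lifts the bottom off itself away from the closed set `A`. -/
theorem exists_of_isClosed {A : Set Cylinder} (hA : IsClosed A) :
    ∃ f, IsBottomPush A f ∧ ∀ y, (f y).2 = 0 → y ∈ A := by
  let B : Set Cylinder := A ∪ {p | p.2 = 1}
  have hB : IsClosed B := hA.union (isClosed_eq continuous_snd continuous_const)
  have hBne : B.Nonempty := ⟨(⟨0, by simp⟩, 1), Or.inr rfl⟩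
  let l : ↥Disc2 → ℝ := fun x => Metric.infDist ((x, 0) : Cylinder) B / 2
  have hl : Continuous l :=
    ((Metric.continuous_infDist_pt B).comp (continuous_id.prodMk continuous_const)).div_const 2
  have hl0 : ∀ x, 0 ≤ l x := fun x => div_nonneg Metric.infDist_nonneg (by norm_num)
  have hlB : ∀ x (s : unitInterval), (x, s) ∈ B → l x ≤ s / 2 := by
    intro x s hs
    have h1 : Metric.infDist ((x, 0) : Cylinder) B ≤ s := by
      refine (Metric.infDist_le_dist_of_mem hs).trans ?_
      rw [Prod.dist_eq, dist_self, Subtype.dist_eq, Real.dist_eq]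
      have := s.2.1
      simpa [abs_of_nonneg this] using this
    simp only [l]; linarith
  have hl1 : ∀ x, l x ≤ 1 / 2 := fun x => by simpa using hlB x 1 (Or.inr rfl)
  have hmem : ∀ y : Cylinder, max (y.2 : ℝ) ((y.2 + l y.1) / 2) ∈ unitInterval := by
    intro y
    have h1 := y.2.2.1
    have h2 := y.2.2.2
    exact ⟨le_max_of_le_left h1, max_le h2 (by have := hl1 y.1; linarith)⟩
  let f : Cylinder → Cylinder := fun y => (y.1, ⟨_, hmem y⟩)
  have hfix : ∀ y : Cylinder, l y.1 ≤ y.2 → f y = y := by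
    intro y hy
    refine Prod.ext rfl (Subtype.ext ?_)
    exact max_eq_left (by linarith)
  have hmove : ∀ y : Cylinder, (y.2 : ℝ) < l y.1 →
      ((f y).2 : ℝ) = (y.2 + l y.1) / 2 := by
    intro y hy
    exact max_eq_right (by linarith)
  have hfA : ∀ y, f y ∈ B → f y = y := by
    intro y hy
    rcases le_or_gt (l y.1) y.2 with h | h
    · exact hfix y h
    · have h1 := hlB (f y).1 (f y).2 hy
      rw [hmove y h] at h1
      have h2 : l (f y).1 = l y.1 := rfl
      have := y.2.2.1
      linarith
  have hzero : ∀ y, (f y).2 = 0 → f y = y ∧ y ∈ A := by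
    intro y hy
    have hy' : max (y.2 : ℝ) ((y.2 + l y.1) / 2) = 0 := congrArg Subtype.val hy
    have h1 := hl0 y.1
    have h2 := y.2.2.1
    have h3 : (y.2 : ℝ) ≤ 0 := (le_max_left _ _).trans_eq hy'
    have h4 : (y.2 + l y.1) / 2 ≤ 0 := (le_max_right _ _).trans_eq hy'
    have h5 : l y.1 = 0 := by linarith
    refine ⟨hfix y (by linarith), ?_⟩
    have h6 : Metric.infDist ((y.1, 0) : Cylinder) B = 0 := by simpa [l] using h5
    have h7 : y = (y.1, 0) := Prod.ext rfl (Subtype.ext (le_antisymm h3 h2))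
    have h8 := (hB.mem_iff_infDist_zero hBne).2 h6
    rw [← h7] at h8
    refine h8.resolve_right fun h9 => ?_
    have h10 : (y.2 : ℝ) = 1 := congrArg Subtype.val h9
    linarith
  refine ⟨f, ⟨?_, ?_, ?_, fun y hy => (hzero y hy).1, fun y hy => hfA y (Or.inr hy),
    fun y h => h, fun y _ => rfl⟩, fun y hy => (hzero y hy).2⟩
  · fun_prop
  · intro y z h
    have h1 : y.1 = z.1 := (Prod.ext_iff.1 h).1
    have h2 : max (y.2 : ℝ) ((y.2 + l y.1) / 2) = max (z.2 : ℝ) ((z.2 + l z.1) / 2) :=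
      congrArg (fun q : Cylinder => (q.2 : ℝ)) h
    refine Prod.ext h1 (Subtype.ext ?_)
    rw [h1] at h2
    rcases lt_trichotomy (y.2 : ℝ) z.2 with h3 | h3 | h3
    · exact absurd h2 (max_lt_max h3 (by linarith)).ne
    · exact h3
    · exact absurd h2 (max_lt_max h3 (by linarith)).ne'
  · intro y hy
    have := hfA y (Or.inl hy)
    rwa [this] at hy

/-- Local pushes at the finitely many bottom points of `A` yield a global push off the bottom. -/
theorem exists_off_bottom {A : Set Cylinder} (hA : IsClosed A)
    (hfin : (A ∩ {p | p.2 = 0}).Finite)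
    (hloc : ∀ p ∈ A, p.2 = 0 → ∃ h, IsBottomPush A h ∧ (h p).2 ≠ 0) :
    ∃ g, IsBottomPush A g ∧ ∀ y, (g y).2 ≠ 0 := by
  obtain ⟨h, hh, hhA⟩ := exists_forall_finite hfin fun p hp => hloc p hp.1 hp.2
  obtain ⟨f, hf, hfA⟩ := exists_of_isClosed hA
  refine ⟨f ∘ h, hf.comp hh, fun y hy => ?_⟩
  have h1 : h y ∈ A := hfA _ hy
  have h2 : f (h y) = h y := hf.eq_of_zero _ hy
  have h3 : (h y).2 = 0 := by rw [← h2]; exact hy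
  have h4 := hh.eq_of_zero _ h3
  rw [h4] at h1 h3
  exact hhA y ⟨h1, h3⟩ (by rw [h4]; exact h3)

/-- A push supported in a half-box coordinate neighbourhood of a bottom point. -/
theorem exists_of_halfBox {A : Set Cylinder} {r : ℝ} (hr : 0 < r) {ψ : ℝ × ℝ × ℝ → Cylinder}
    (hc : ContinuousOn ψ (Icc (-r) r ×ˢ Icc (-r) r ×ˢ Icc 0 r))
    (hinj : InjOn ψ (Icc (-r) r ×ˢ Icc (-r) r ×ˢ Icc 0 r))
    (hopen : IsOpen (ψ '' (Ioo (-r) r ×ˢ Ioo (-r) r ×ˢ Ico 0 r)))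
    (hA : ∀ v ∈ Icc (-r) r ×ˢ Icc (-r) r ×ˢ Icc 0 r, ψ v ∈ A ↔ v.1 = 0 ∧ v.2.1 = 0)
    (hbot : ∀ v ∈ Icc (-r) r ×ˢ Icc (-r) r ×ˢ Icc 0 r, (ψ v).2 = 0 ↔ v.2.2 = 0)
    (htop : ∀ v ∈ Icc (-r) r ×ˢ Icc (-r) r ×ˢ Icc 0 r, (ψ v).2 ≠ 1)
    (hside : ∀ v ∈ Icc (-r) r ×ˢ Icc (-r) r ×ˢ Icc 0 r, ‖((ψ v).1 : ℂ)‖ ≠ 1) :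
    ∃ h, IsBottomPush A h ∧ (h (ψ 0)).2 ≠ 0 := by
  classical
  set N : Set (ℝ × ℝ × ℝ) := Icc (-r) r ×ˢ Icc (-r) r ×ˢ Icc 0 r with hN
  set O : Set (ℝ × ℝ × ℝ) := Ioo (-r) r ×ˢ Ioo (-r) r ×ˢ Ico 0 r with hO
  have hNc : IsCompact N := isCompact_Icc.prod (isCompact_Icc.prod isCompact_Icc)
  have hON : O ⊆ N := prod_mono Ioo_subset_Icc_self
    (prod_mono Ioo_subset_Icc_self Ico_subset_Icc_self)
  let b : ℝ × ℝ × ℝ → ℝ × ℝ × ℝ := fun v =>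
    (v.1, v.2.1, max v.2.2 ((r - |v.1| - |v.2.1| + v.2.2) / 2))
  have hbc : Continuous b := by fun_prop
  have hbN : MapsTo b N N := by
    rintro ⟨x, y, z⟩ ⟨hx, hy, hz⟩
    refine ⟨hx, hy, le_max_of_le_left hz.1, max_le hz.2 ?_⟩
    have := abs_nonneg x
    have := abs_nonneg y
    have := hz.2
    simp only at *
    linarith
  have hbinj : Function.Injective b := by
    rintro ⟨x, y, z⟩ ⟨x', y', z'⟩ h
    simp only [b, Prod.mk.injEq] at h
    obtain ⟨rfl, rfl, h⟩ := h
    rcases lt_trichotomy z z' with h3 | h3 | h3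
    · exact absurd h (max_lt_max h3 (by linarith)).ne
    · rw [h3]
    · exact absurd h (max_lt_max h3 (by linarith)).ne'
  have hbO : ∀ v ∈ N, v ∉ O → b v = v := by
    rintro ⟨x, y, z⟩ ⟨hx, hy, hz⟩ hv
    refine Prod.ext rfl (Prod.ext rfl (max_eq_left ?_))
    have hx0 := abs_nonneg x
    have hy0 := abs_nonneg y
    simp only at *
    by_contra hlt
    refine hv ⟨?_, ?_, hz.1, ?_⟩
    · exact abs_lt.1 (by linarith [hz.1])
    · exact abs_lt.1 (by linarith [hz.1])
    · simp only; linarith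
  have hbz : ∀ v ∈ N, (b v).2.2 = 0 → b v = v := by
    rintro ⟨x, y, z⟩ ⟨hx, hy, hz⟩ h
    refine Prod.ext rfl (Prod.ext rfl (max_eq_left ?_))
    have h1 := (le_max_right z ((r - |x| - |y| + z) / 2)).trans_eq h
    exact h1.trans hz.1
  let ρ : Cylinder → ℝ × ℝ × ℝ := Function.invFunOn ψ N
  have hρN : ∀ v ∈ N, ρ (ψ v) = v := fun v hv => hinj.leftInvOn_invFunOn hv
  have hρc : ContinuousOn ρ (ψ '' N) := by
    refine continuousOn_iff_isClosed.2 fun s hs => ⟨ψ '' (N ∩ s), ?_, ?_⟩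
    · exact ((hNc.inter_right hs).image_of_continuousOn (hc.mono inter_subset_left)).isClosed
    · ext y
      constructor
      · rintro ⟨hy, v, hv, rfl⟩
        rw [mem_preimage, hρN v hv] at hy
        exact ⟨⟨v, ⟨hv, hy⟩, rfl⟩, ⟨v, hv, rfl⟩⟩
      · rintro ⟨⟨v, hv, rfl⟩, hy⟩
        refine ⟨?_, hy⟩
        rw [mem_preimage, hρN v hv.1]
        exact hv.2
  let h : Cylinder → Cylinder := fun y => if y ∈ ψ '' N then ψ (b (ρ y)) else y
  have hin : ∀ v ∈ N, h (ψ v) = ψ (b v) := by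
    intro v hv
    simp only [h, if_pos (mem_image_of_mem ψ hv), hρN v hv]
  have hout : ∀ y, y ∉ ψ '' N → h y = y := fun y hy => if_neg hy
  have hcases : ∀ y, (∃ v ∈ N, ψ v = y ∧ h y = ψ (b v)) ∨ (y ∉ ψ '' N ∧ h y = y) := by
    intro y
    by_cases hy : y ∈ ψ '' N
    · obtain ⟨v, hv, rfl⟩ := hy
      exact Or.inl ⟨v, hv, rfl, hin v hv⟩
    · exact Or.inr ⟨hy, hout y hy⟩
  have hcont : Continuous h := by
    rw [← continuousOn_univ]
    have hcov : ψ '' N ∪ (ψ '' O)ᶜ = univ := by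
      refine eq_univ_of_forall fun y => ?_
      by_cases hy : y ∈ ψ '' O
      · exact Or.inl (image_mono hON hy)
      · exact Or.inr hy
    rw [← hcov]
    refine ContinuousOn.union_of_isClosed ?_ ?_
      (hNc.image_of_continuousOn hc).isClosed hopen.isClosed_compl
    · refine ContinuousOn.congr (f := fun y => ψ (b (ρ y))) ?_ fun y hy => if_pos hy
      refine hc.comp (hbc.comp_continuousOn hρc) ?_
      rintro _ ⟨v, hv, rfl⟩
      simpa only [hρN v hv] using hbN hv
    · refine continuousOn_id.congr fun y hy => ?_
      rcases hcases y with ⟨v, hv, rfl, h1⟩ | h1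
      · rw [h1, hbO v hv fun hvO => hy ⟨v, hvO, rfl⟩]; rfl
      · exact h1.2
  have h0N : (0 : ℝ × ℝ × ℝ) ∈ N := by
    refine ⟨⟨?_, ?_⟩, ⟨?_, ?_⟩, ⟨?_, ?_⟩⟩ <;> simp [hr.le]
  refine ⟨h, ⟨hcont, ?_, ?_, ?_, ?_, ?_, ?_⟩, ?_⟩
  · intro y z hyz
    rcases hcases y with ⟨v, hv, rfl, h1⟩ | ⟨hy, h1⟩ <;>
      rcases hcases z with ⟨w, hw, rfl, h2⟩ | ⟨hz, h2⟩
    · rw [h1, h2] at hyz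
      rw [hbinj (hinj (hbN hv) (hbN hw) hyz)]
    · rw [h1, h2] at hyz
      exact absurd ⟨b v, hbN hv, hyz⟩ hz
    · rw [h1, h2] at hyz
      exact absurd ⟨b w, hbN hw, hyz.symm⟩ hy
    · rwa [h1, h2] at hyz
  · intro y hy
    rcases hcases y with ⟨v, hv, rfl, h1⟩ | ⟨_, h1⟩
    · rw [h1, hA _ (hbN hv)] at hy
      exact (hA v hv).2 hy
    · rwa [h1] at hy
  · intro y hy
    rcases hcases y with ⟨v, hv, rfl, h1⟩ | ⟨_, h1⟩
    · rw [h1, hbot _ (hbN hv)] at hy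
      rw [h1, hbz v hv hy]
    · exact h1
  · intro y hy
    rcases hcases y with ⟨v, hv, rfl, h1⟩ | ⟨_, h1⟩
    · rw [h1] at hy
      exact absurd hy (htop _ (hbN hv))
    · exact h1
  · intro y hy
    rcases hcases y with ⟨v, hv, rfl, h1⟩ | ⟨_, h1⟩
    · rw [h1] at hy
      exact absurd hy (hside _ (hbN hv))
    · rwa [h1] at hy
  · intro y hy
    rcases hcases y with ⟨v, hv, rfl, h1⟩ | ⟨_, h1⟩
    · exact absurd hy (hside _ hv)
    · rw [h1]
  · rw [hin 0 h0N, Ne, hbot _ (hbN h0N)]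
    simpa [b] using hr

end IsBottomPush

section SetCoord

variable {M Z : Type*} [TopologicalSpace M] [TopologicalSpace Z] {S : Set M} (e : ↥S ≃ₜ Z)

/-- The parametrization of a subset by a space homeomorphic to it. -/
def setParam (z : Z) : M := e.symm z

/-- The coordinate function of a subset homeomorphic to `Z`, extended arbitrarily. -/
def setCoord [Nonempty Z] : M → Z := Function.extend Subtype.val e fun _ => Classical.arbitrary Z

theorem continuous_setParam : Continuous (setParam e) :=
  continuous_subtype_val.comp e.symm.continuous

theorem setParam_mem (z : Z) : setParam e z ∈ S := (e.symm z).2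

theorem setParam_injective : Function.Injective (setParam e) :=
  Subtype.val_injective.comp e.symm.injective

variable [Nonempty Z]

theorem setCoord_coe (x : ↥S) : setCoord e x = e x :=
  Subtype.val_injective.extend_apply _ _ x

theorem setCoord_of_mem {x : M} (hx : x ∈ S) : setCoord e x = e ⟨x, hx⟩ :=
  setCoord_coe e ⟨x, hx⟩

@[simp] theorem setCoord_setParam (z : Z) : setCoord e (setParam e z) = z := by
  rw [setParam, setCoord_coe, e.apply_symm_apply]

theorem setParam_setCoord {x : M} (hx : x ∈ S) : setParam e (setCoord e x) = x := by
  rw [setCoord_of_mem e hx, setParam, e.symm_apply_apply]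

theorem continuousOn_setCoord : ContinuousOn (setCoord e) S := by
  rw [continuousOn_iff_continuous_domRestrict]
  exact e.continuous.congr fun x => (setCoord_coe e x).symm

theorem injOn_setCoord : InjOn (setCoord e) S := fun x hx y hy h => by
  rw [← setParam_setCoord e hx, h, setParam_setCoord e hy]

theorem mem_image_val_preimage {s : Set Z} {x : M} :
    x ∈ Subtype.val '' (e ⁻¹' s) ↔ x ∈ S ∧ setCoord e x ∈ s := by
  constructor
  · rintro ⟨y, hy, rfl⟩
    exact ⟨y.2, by rw [setCoord_coe]; exact hy⟩
  · rintro ⟨hx, h⟩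
    exact ⟨⟨x, hx⟩, by rw [setCoord_of_mem e hx] at h; exact h, rfl⟩

end SetCoord

instance : Nonempty ↥Disc2 := ⟨⟨0, by simp⟩⟩

theorem Disc2.norm_le (x : ↥Disc2) : ‖(x : ℂ)‖ ≤ 1 := mem_closedBall_zero_iff.1 x.2

/-- The clamp `ℂ → B²`, the identity on the disc and arbitrary elsewhere. -/
def Disc2.mk' : ℂ → ↥Disc2 := setCoord (Homeomorph.refl ↥Disc2)

theorem Disc2.mk'_of_mem {z : ℂ} (hz : z ∈ Disc2) : Disc2.mk' z = ⟨z, hz⟩ :=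
  setCoord_of_mem _ hz

theorem Disc2.mk'_coe (x : ↥Disc2) : Disc2.mk' x = x := setCoord_coe _ x

theorem Disc2.continuousOn_mk' : ContinuousOn Disc2.mk' Disc2 := continuousOn_setCoord _

/-- The interior of the disc as a chart. -/
def Disc2.chart : OpenPartialHomeomorph ↥Disc2 ℂ where
  toFun := Subtype.val
  invFun := Disc2.mk'
  source := {x | ‖(x : ℂ)‖ < 1}
  target := Metric.ball 0 1
  map_source' x hx := by simpa using hx
  map_target' z hz := by
    rw [Disc2.mk'_of_mem (Metric.ball_subset_closedBall hz)]
    simpa using hz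
  left_inv' x _ := Disc2.mk'_coe x
  right_inv' z hz := by rw [Disc2.mk'_of_mem (Metric.ball_subset_closedBall hz)]
  open_source := isOpen_lt (by fun_prop) continuous_const
  open_target := Metric.isOpen_ball
  continuousOn_toFun := continuous_subtype_val.continuousOn
  continuousOn_invFun := Disc2.continuousOn_mk'.mono Metric.ball_subset_closedBall

/-- A continuous injection of the disc into itself maps the open disc onto an open subset
of the open disc. -/
theorem Disc2.isOpen_image_interior {f : ↥Disc2 → ↥Disc2} (hf : Continuous f)
    (hinj : Function.Injective f) :
    IsOpen (f '' {x | ‖(x : ℂ)‖ < 1}) ∧ ∀ x : ↥Disc2, ‖(x : ℂ)‖ < 1 → ‖(f x : ℂ)‖ < 1 := by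
  have ho : IsOpen ((fun z => (f (Disc2.mk' z) : ℂ)) '' Metric.ball 0 1) := by
    refine Metric.isOpen_ball.image_of_continuousOn_injOn rfl ?_ ?_
    · exact (continuous_subtype_val.comp hf).comp_continuousOn
        (Disc2.continuousOn_mk'.mono Metric.ball_subset_closedBall)
    · intro x hx y hy h
      have := hinj (Subtype.ext h)
      exact injOn_setCoord _ (Metric.ball_subset_closedBall hx)
        (Metric.ball_subset_closedBall hy) this
  have himg : (fun z => (f (Disc2.mk' z) : ℂ)) '' Metric.ball 0 1
      = Subtype.val '' (f '' {x | ‖(x : ℂ)‖ < 1}) := by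
    ext z
    constructor
    · rintro ⟨w, hw, rfl⟩
      refine ⟨_, ⟨Disc2.mk' w, ?_, rfl⟩, rfl⟩
      rw [Disc2.mk'_of_mem (Metric.ball_subset_closedBall hw)]
      simpa using hw
    · rintro ⟨_, ⟨x, hx, rfl⟩, rfl⟩
      exact ⟨x, by simpa using hx, by simp only [Disc2.mk'_coe]⟩
  rw [himg] at ho
  refine ⟨?_, fun x hx => ?_⟩
  · rw [← preimage_image_eq (f '' _) Subtype.val_injective]
    exact ho.preimage continuous_subtype_val
  · have h1 : (f x : ℂ) ∈ interior (Metric.closedBall (0 : ℂ) 1) := by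
      refine mem_interior.2 ⟨_, ?_, ho, ⟨_, ⟨x, hx, rfl⟩, rfl⟩⟩
      rintro _ ⟨y, -, rfl⟩
      exact y.2
    rw [interior_closedBall _ one_ne_zero] at h1
    simpa using h1

/-- The cone extension of an injection of the unit circle to the disc. -/
theorem Disc2.exists_cone {a : ↥Disc2 → ↥Disc2} (hc : ContinuousOn a {x | ‖(x : ℂ)‖ = 1})
    (hinj : InjOn a {x | ‖(x : ℂ)‖ = 1})
    (hmaps : MapsTo a {x | ‖(x : ℂ)‖ = 1} {x | ‖(x : ℂ)‖ = 1}) :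
    ∃ R : ↥Disc2 → ↥Disc2, Continuous R ∧ Function.Injective R ∧
      (∀ x, ‖(R x : ℂ)‖ = ‖(x : ℂ)‖) ∧ ∀ x : ↥Disc2, ‖(x : ℂ)‖ = 1 → R x = a x := by
  let u : ↥Disc2 → ℂ := fun x => (x : ℂ) / ‖(x : ℂ)‖
  have hu : ∀ x : ↥Disc2, (x : ℂ) ≠ 0 → ‖u x‖ = 1 := by
    intro x hx
    simp only [u, norm_div, Complex.norm_real, norm_norm]
    exact div_self (norm_ne_zero_iff.2 hx)
  have hu' : ∀ x : ↥Disc2, (x : ℂ) ≠ 0 → u x ∈ Disc2 := fun x hx => by simp [hu x hx]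
  let w : ↥Disc2 → ↥Disc2 := fun x => Disc2.mk' (u x)
  have hw : ∀ x : ↥Disc2, (x : ℂ) ≠ 0 → (w x : ℂ) = u x := fun x hx => by
    simp only [w, Disc2.mk'_of_mem (hu' x hx)]
  have hw1 : ∀ x : ↥Disc2, (x : ℂ) ≠ 0 → ‖(w x : ℂ)‖ = 1 := fun x hx => by
    rw [hw x hx, hu x hx]
  let c : ↥Disc2 → ℂ := fun x => ‖(x : ℂ)‖ * (a (w x) : ℂ)
  have hcn : ∀ x, ‖c x‖ = ‖(x : ℂ)‖ := by
    intro x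
    by_cases hx : (x : ℂ) = 0
    · simp [c, hx]
    · simp only [c, norm_mul, Complex.norm_real, norm_norm]
      rw [show ‖(a (w x) : ℂ)‖ = 1 from hmaps (hw1 x hx), mul_one]
  have hcc : Continuous c := by
    rw [continuous_iff_continuousAt]
    intro x
    by_cases hx : (x : ℂ) = 0
    · have hcx : c x = 0 := by simp [c, hx]
      rw [ContinuousAt, hcx, tendsto_zero_iff_norm_tendsto_zero]
      simp only [hcn]
      have : ContinuousAt (fun y : ↥Disc2 => ‖(y : ℂ)‖) x := by fun_prop
      simpa [ContinuousAt, hx] using this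
    · have ho : IsOpen {y : ↥Disc2 | (y : ℂ) ≠ 0} := isOpen_ne_fun (by fun_prop) continuous_const
      refine ContinuousOn.continuousAt (s := {y : ↥Disc2 | (y : ℂ) ≠ 0}) ?_ (ho.mem_nhds hx)
      have huc : ContinuousOn u {y : ↥Disc2 | (y : ℂ) ≠ 0} := by
        refine ContinuousOn.div (by fun_prop) (by fun_prop) fun y hy => ?_
        simpa using hy
      have hwc : ContinuousOn w {y : ↥Disc2 | (y : ℂ) ≠ 0} :=
        Disc2.continuousOn_mk'.comp huc fun y hy => hu' y hy
      refine ContinuousOn.mul (by fun_prop) ?_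
      exact continuous_subtype_val.comp_continuousOn (hc.comp hwc fun y hy => hw1 y hy)
  have hcD : ∀ x, c x ∈ Disc2 := fun x =>
    mem_closedBall_zero_iff.2 ((hcn x).trans_le (Disc2.norm_le x))
  refine ⟨fun x => ⟨c x, hcD x⟩, hcc.subtype_mk hcD, ?_, hcn, ?_⟩
  · intro x y h
    have h' : c x = c y := congrArg Subtype.val h
    have hn : ‖(x : ℂ)‖ = ‖(y : ℂ)‖ := by rw [← hcn, ← hcn, h']
    by_cases hx : (x : ℂ) = 0
    · have hy : (y : ℂ) = 0 := by rw [hx, norm_zero] at hn; exact norm_eq_zero.1 hn.symm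
      exact Subtype.ext (hx.trans hy.symm)
    · have hy : (y : ℂ) ≠ 0 := fun hy => hx (by rw [hy, norm_zero] at hn; exact norm_eq_zero.1 hn)
      have hx0 : (‖(x : ℂ)‖ : ℂ) ≠ 0 := by simpa using hx
      simp only [c, hn] at h'
      rw [hn] at hx0
      have h2 := hinj (hw1 x hx) (hw1 y hy) (Subtype.ext (mul_left_cancel₀ hx0 h'))
      have h3 : u x = u y := by rw [← hw x hx, h2, hw y hy]
      simp only [u, hn] at h3
      exact Subtype.ext ((div_left_inj' hx0).1 h3)
  · intro x hx
    refine Subtype.ext ?_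
    have : w x = x := by
      simp only [w, u, hx, Complex.ofReal_one, div_one, Disc2.mk'_coe]
    simp [c, this, hx]

namespace SolidTorus

variable (T : SolidTorus X)

theorem mem_intr {x : X} : x ∈ T.intr ↔ x ∈ T.carrier ∧ ‖((setCoord T.homeo x).1 : ℂ)‖ < 1 :=
  mem_image_val_preimage T.homeo

theorem mem_bdry {x : X} : x ∈ T.bdry ↔ x ∈ T.carrier ∧ ‖((setCoord T.homeo x).1 : ℂ)‖ = 1 :=
  mem_image_val_preimage T.homeo

theorem intr_subset : T.intr ⊆ T.carrier := fun _ hx => (T.mem_intr.1 hx).1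

theorem exists_chart (p : ↥T.carrier) (hp : (p : X) ∈ T.intr) :
    ∃ e : OpenPartialHomeomorph ↥T.carrier (ℂ × ℝ), p ∈ e.source := by
  obtain ⟨t, ht⟩ := Circle.exp_surjective (T.homeo p).2
  obtain ⟨c, hc, hce⟩ := Circle.isCoveringMap_exp.isLocalHomeomorph t
  refine ⟨T.homeo.toOpenPartialHomeomorph.trans (Disc2.chart.prod c.symm), ?_⟩
  have h1 := (T.mem_intr.1 hp).2
  rw [setCoord_coe] at h1
  have h2 := c.map_source hc
  rw [← hce, ht] at h2
  simp only [OpenPartialHomeomorph.trans_source, OpenPartialHomeomorph.prod_source]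
  exact ⟨mem_univ _, h1, h2⟩

/-- Invariance of domain for injections defined on a neighbourhood in the solid torus. -/
theorem image_mem_nhds {F : Type*} [NormedAddCommGroup F] [NormedSpace ℝ F]
    [FiniteDimensional ℝ F] (hF : Module.finrank ℝ F = 3) {g : X → F} {V : Set X} {p : X}
    (hp : p ∈ T.intr) (hV : V ∈ 𝓝[T.carrier] p)
    (hc : ContinuousOn g V) (hinj : InjOn g V) : g '' V ∈ 𝓝 (g p) := by
  obtain ⟨e, he⟩ := T.exists_chart ⟨p, T.intr_subset hp⟩ hp
  have h := image_mem_nhds_of_chart_source (by simp [hF]) e (g := fun x => g x)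
    (V := Subtype.val ⁻¹' V) (p := ⟨p, T.intr_subset hp⟩)
    (preimage_coe_mem_nhds_subtype.2 hV)
    (hc.comp continuous_subtype_val.continuousOn fun x hx => hx)
    (fun x hx y hy h => Subtype.ext (hinj hx hy h)) he
  refine Filter.mem_of_superset h ?_
  rintro _ ⟨x, hx, rfl⟩
  exact ⟨x, hx, rfl⟩

/-- Invariance of domain for injections into the solid torus. -/
theorem image_mem_nhdsWithin {F : Type*} [NormedAddCommGroup F] [NormedSpace ℝ F]
    [FiniteDimensional ℝ F] (hF : Module.finrank ℝ F = 3) {f : F → X} {U : Set F} {x : F}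
    (hU : IsOpen U) (hx : x ∈ U) (hfx : f x ∈ T.intr) (hfT : MapsTo f U T.carrier)
    (hc : ContinuousOn f U) (hinj : InjOn f U) : f '' U ∈ 𝓝[T.carrier] (f x) := by
  obtain ⟨e, he⟩ := T.exists_chart ⟨f x, T.intr_subset hfx⟩ hfx
  classical
  let f' : F → ↥T.carrier := fun y => if h : f y ∈ T.carrier then ⟨f y, h⟩ else
    ⟨f x, T.intr_subset hfx⟩
  have hf' : ∀ y ∈ U, (f' y : X) = f y := fun y hy => by
    simp only [f', dif_pos (hfT hy)]
  have hx' : f' x = ⟨f x, T.intr_subset hfx⟩ := Subtype.ext (hf' x hx)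
  have h := image_mem_nhds_of_chart_target (by simp [hF]) e (f := f') hU
    (Topology.IsInducing.subtypeVal.continuousOn_iff.2 (hc.congr hf'))
    (fun y hy z hz h => hinj hy hz (by rw [← hf' y hy, h, hf' z hz])) hx (by rw [hx']; exact he)
  have h2 := Filter.image_mem_map (m := Subtype.val) h
  rw [map_nhds_subtype_val, hx'] at h2
  refine Filter.mem_of_superset h2 ?_
  rintro _ ⟨_, ⟨y, hy, rfl⟩, rfl⟩
  exact ⟨y, hy, (hf' y hy).symm⟩

end SolidTorus

/-- Replacing the disc bounded by a curve in the bottom of the cylinder by a disc with the same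
boundary above it. -/
theorem Disc2.exists_surgery {d' : ↥Disc2 → Cylinder} {d'' : ↥Disc2 → ↥Disc2}
    (hd' : Continuous d') (hd'inj : Function.Injective d')
    (hd'' : Continuous d'') (hd''inj : Function.Injective d'')
    (hbot : ∀ x, (d' x).2 = 0 ↔ ‖(x : ℂ)‖ = 1) (htop : ∀ x, (d' x).2 ≠ 1)
    (hside : ∀ x, ‖((d' x).1 : ℂ)‖ ≠ 1) (hside'' : ∀ x, ‖(d'' x : ℂ)‖ ≠ 1)
    (hbd : ∀ x : ↥Disc2, ‖(x : ℂ)‖ = 1 → (d'' x, 0) ∈ range d') :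
    ∃ g : ↥Disc2 → Cylinder, Continuous g ∧ Function.Injective g ∧
      (∀ x, g x ∈ range d' ∨ (x ∉ range d'' ∧ g x = (x, 0))) ∧
      (∀ x : ↥Disc2, ‖(x : ℂ)‖ = 1 → g x = (x, 0)) ∧
      (∀ x, ‖((g x).1 : ℂ)‖ = 1 → ‖(x : ℂ)‖ = 1) ∧ ∀ x, (g x).2 ≠ 1 := by
  classical
  have hemb' := (hd'.isClosedEmbedding hd'inj).isEmbedding
  have hemb'' := hd''.isClosedEmbedding hd''inj
  let e' : ↥(range d') ≃ₜ ↥Disc2 := hemb'.toHomeomorph.symm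
  let e'' : ↥(range d'') ≃ₜ ↥Disc2 := hemb''.isEmbedding.toHomeomorph.symm
  have hp' : ∀ z, setParam e' z = d' z := fun z => rfl
  have hp'' : ∀ z, setParam e'' z = d'' z := fun z => rfl
  let a : ↥Disc2 → ↥Disc2 := fun x => setCoord e' (d'' x, 0)
  have ha : ∀ x : ↥Disc2, ‖(x : ℂ)‖ = 1 → d' (a x) = (d'' x, 0) := fun x hx => by
    rw [← hp', setParam_setCoord e' (hbd x hx)]
  obtain ⟨R, hRc, hRinj, hRn, hRa⟩ := Disc2.exists_cone (a := a)
    ((continuousOn_setCoord e').comp (by fun_prop) fun x hx => hbd x hx)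
    (fun x hx y hy h => by
      have h1 : (d'' x, (0 : unitInterval)) = (d'' y, 0) := by rw [← ha x hx, ← ha y hy, h]
      exact hd''inj (Prod.ext_iff.1 h1).1)
    (fun x hx => (hbot _).1 (by rw [ha x hx]))
  have hRbd : ∀ x : ↥Disc2, ‖(x : ℂ)‖ = 1 → d' (R x) = (d'' x, 0) := fun x hx => by
    rw [hRa x hx, ha x hx]
  let g : ↥Disc2 → Cylinder := fun x =>
    if x ∈ range d'' then d' (R (setCoord e'' x)) else (x, 0)
  have hin : ∀ z, g (d'' z) = d' (R z) := fun z => by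
    simp only [g, if_pos (mem_range_self z)]
    rw [← hp'' z, setCoord_setParam]
  have hout : ∀ x, x ∉ range d'' → g x = (x, 0) := fun x hx => if_neg hx
  have hgc : Continuous g := by
    have hcov : range d'' ∪ (d'' '' {x | ‖(x : ℂ)‖ < 1})ᶜ = univ := by
      refine eq_univ_of_forall fun y => ?_
      by_cases hy : y ∈ range d''
      · exact Or.inl hy
      · exact Or.inr fun h => hy (image_subset_range _ _ h)
    rw [← continuousOn_univ, ← hcov]
    refine ContinuousOn.union_of_isClosed ?_ ?_ hemb''.isClosed_range
      (Disc2.isOpen_image_interior hd'' hd''inj).1.isClosed_compl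
    · refine ContinuousOn.congr (f := fun x => d' (R (setCoord e'' x))) ?_ fun x hx => if_pos hx
      exact (hd'.comp hRc).comp_continuousOn (continuousOn_setCoord e'')
    · refine ContinuousOn.congr (f := fun x => (x, (0 : unitInterval))) (by fun_prop)
        fun x hx => ?_
      by_cases hxr : x ∈ range d''
      · obtain ⟨z, rfl⟩ := hxr
        have hz : ‖(z : ℂ)‖ = 1 :=
          le_antisymm (Disc2.norm_le z) (not_lt.1 fun h => hx ⟨z, h, rfl⟩)
        rw [hin, hRbd z hz]
      · exact hout x hxr
  have hmix : ∀ z y, y ∉ range d'' → d' (R z) ≠ (y, 0) := by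
    intro z y hy h
    have h1 : ‖(z : ℂ)‖ = 1 := by rw [← hRn z, ← hbot, h]
    rw [hRbd z h1] at h
    exact hy ⟨z, (Prod.ext_iff.1 h).1⟩
  refine ⟨g, hgc, ?_, ?_, ?_, ?_, ?_⟩
  · intro x y h
    by_cases hx : x ∈ range d'' <;> by_cases hy : y ∈ range d''
    · obtain ⟨z, rfl⟩ := hx
      obtain ⟨w, rfl⟩ := hy
      rw [hin, hin] at h
      rw [hRinj (hd'inj h)]
    · obtain ⟨z, rfl⟩ := hx
      rw [hin, hout y hy] at h
      exact absurd h (hmix z y hy)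
    · obtain ⟨w, rfl⟩ := hy
      rw [hin, hout x hx] at h
      exact absurd h.symm (hmix w x hx)
    · rw [hout x hx, hout y hy] at h
      exact (Prod.ext_iff.1 h).1
  · intro x
    by_cases hx : x ∈ range d''
    · obtain ⟨z, rfl⟩ := hx
      exact Or.inl (by rw [hin]; exact mem_range_self _)
    · exact Or.inr ⟨hx, hout x hx⟩
  · intro x hx
    refine hout x ?_
    rintro ⟨z, rfl⟩
    exact hside'' z hx
  · intro x hx
    by_cases hxr : x ∈ range d''
    · obtain ⟨z, rfl⟩ := hxr
      rw [hin] at hx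
      exact absurd hx (hside _)
    · rwa [hout x hxr] at hx
  · intro x
    by_cases hxr : x ∈ range d''
    · obtain ⟨z, rfl⟩ := hxr
      rw [hin]
      exact htop _
    · rw [hout x hxr]
      exact zero_ne_one

namespace Chamber

variable (C : Chamber X)

theorem mem_top {x : X} : x ∈ C.top ↔ x ∈ C.carrier ∧ (setCoord C.homeo x).2 = 1 :=
  mem_image_val_preimage C.homeo

theorem mem_bot {x : X} : x ∈ C.bot ↔ x ∈ C.carrier ∧ (setCoord C.homeo x).2 = 0 :=
  mem_image_val_preimage C.homeo

theorem mem_bdry {x : X} : x ∈ C.bdry ↔ x ∈ C.carrier ∧ (‖((setCoord C.homeo x).1 : ℂ)‖ = 1 ∨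
    (setCoord C.homeo x).2 = 0 ∨ (setCoord C.homeo x).2 = 1) :=
  mem_image_val_preimage C.homeo

theorem mem_sideAnnulus {x : X} : x ∈ C.sideAnnulus ↔ x ∈ C.carrier ∧
    ‖((setCoord C.homeo x).1 : ℂ)‖ = 1 ∧ (setCoord C.homeo x).2 ≠ 0 ∧
    (setCoord C.homeo x).2 ≠ 1 := by
  rw [sideAnnulus, mem_sdiff, mem_union, C.mem_bdry, C.mem_top, C.mem_bot]
  tauto

/-- An embedded disc in the model cylinder which spans the side yields an interior
meridional disc. -/
theorem exists_interiorMeridionalDisc {E : ↥Disc2 → Cylinder} (hE : Continuous E)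
    (hinj : Function.Injective E) (h0 : ∀ x, (E x).2 ≠ 0) (h1 : ∀ x, (E x).2 ≠ 1)
    (hside : ∀ x, ‖((E x).1 : ℂ)‖ = 1 → ‖(x : ℂ)‖ = 1)
    (hfst : ∀ x : ↥Disc2, ‖(x : ℂ)‖ = 1 → (E x).1 = x) :
    ∃ M : InteriorMeridionalDisc C, M.carrier = range (setParam C.homeo ∘ E) := by
  have hemb : IsEmbedding (setParam C.homeo ∘ E) :=
    (IsEmbedding.subtypeVal.comp C.homeo.symm.isEmbedding).comp
      (hE.isClosedEmbedding hinj).isEmbedding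
  let e : ↥(range (setParam C.homeo ∘ E)) ≃ₜ ↥Disc2 := hemb.toHomeomorph.symm
  have hbd : ∀ x, x ∈ Subtype.val '' (e ⁻¹' {p | ‖(p : ℂ)‖ = 1}) ↔
      ∃ z : ↥Disc2, ‖(z : ℂ)‖ = 1 ∧ setParam C.homeo (E z) = x := by
    intro x
    rw [mem_image_val_preimage]
    constructor
    · rintro ⟨⟨z, rfl⟩, hz⟩
      refine ⟨z, ?_, rfl⟩
      have h : setCoord e (setParam e z) = z := setCoord_setParam e z
      exact h ▸ hz
    · rintro ⟨z, hz, rfl⟩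
      refine ⟨mem_range_self z, ?_⟩
      have h : setCoord e (setParam e z) = z := setCoord_setParam e z
      exact h.symm ▸ hz
  have hann : ∀ z : ↥Disc2, ‖(z : ℂ)‖ = 1 → setParam C.homeo (E z) ∈ C.sideAnnulus := by
    intro z hz
    rw [C.mem_sideAnnulus, setCoord_setParam, hfst z hz]
    exact ⟨setParam_mem _ _, hz, h0 z, h1 z⟩
  refine ⟨⟨_, ?_, e, _, rfl, ?_, ?_, ?_⟩, rfl⟩
  · rintro _ ⟨z, rfl⟩
    refine ⟨setParam_mem _ _, ?_⟩
    rw [mem_union, C.mem_top, C.mem_bot, Function.comp, setCoord_setParam]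
    rintro (h | h)
    · exact h1 z h.2
    · exact h0 z h.2
  · ext x
    rw [hbd, mem_inter_iff, C.mem_bdry]
    constructor
    · rintro ⟨⟨z, rfl⟩, -, h⟩
      rw [Function.comp, setCoord_setParam] at h
      refine ⟨z, ?_, rfl⟩
      rcases h with h | h | h
      · exact hside z h
      · exact absurd h (h0 z)
      · exact absurd h (h1 z)
    · rintro ⟨z, hz, rfl⟩
      exact ⟨mem_range_self z, (C.mem_bdry.1 (hann z hz).1)⟩
  · intro x hx
    obtain ⟨z, hz, rfl⟩ := (hbd x).1 hx
    exact hann z hz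
  · rintro ⟨hsub, y, hy⟩
    have hcirc : ∀ z : Circle, (z : ℂ) ∈ Disc2 := fun z =>
      mem_closedBall_zero_iff.2 z.norm_coe.le
    let c : Circle → ↥Disc2 := fun z => ⟨z, hcirc z⟩
    have hc1 : ∀ z, ‖(c z : ℂ)‖ = 1 := fun z => z.norm_coe
    have hcc : Continuous c := by fun_prop
    let γ : C(Circle, ↥(Subtype.val '' (e ⁻¹' {p | ‖(p : ℂ)‖ = 1}))) :=
      ⟨fun z => ⟨setParam C.homeo (E (c z)), (hbd _).2 ⟨c z, hc1 z, rfl⟩⟩,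
        ((continuous_setParam C.homeo).comp (hE.comp hcc)).subtype_mk _⟩
    let δ : C(↥C.sideAnnulus, Circle) :=
      ⟨fun x => ⟨((setCoord C.homeo x).1 : ℂ), mem_sphere_zero_iff_norm.2
          (C.mem_sideAnnulus.1 x.2).2.1⟩, by
        refine Continuous.subtype_mk ?_ _
        refine continuous_subtype_val.comp (continuous_fst.comp ?_)
        exact (continuousOn_setCoord C.homeo).comp_continuous continuous_subtype_val
          fun x => (C.mem_sideAnnulus.1 x.2).1⟩
    have hH := (ContinuousMap.Homotopic.refl δ).comp (hy.comp (ContinuousMap.Homotopic.refl γ))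
    refine Circle.not_homotopic_id_const (δ y) ?_
    convert hH using 1
    swap
    · rfl
    ext z
    have : ((setCoord C.homeo (setParam C.homeo (E (c z)))).1 : ℂ) = z := by
      rw [setCoord_setParam, hfst _ (hc1 z)]
    exact this.symm

end Chamber

theorem isCompact_of_homeomorph {M Z : Type*} [TopologicalSpace M] [TopologicalSpace Z]
    [CompactSpace Z] {S : Set M} (e : ↥S ≃ₜ Z) : IsCompact S :=
  isCompact_iff_compactSpace.2 e.symm.compactSpace

namespace SolidTorus

variable (T : SolidTorus X)

theorem isClosed_preimage_val {K : Set X} (hK : IsCompact K) (hKT : K ⊆ T.carrier) :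
    IsClosed ((↑) ⁻¹' K : Set ↥T.carrier) := by
  have : T2Space ↥T.carrier := T.homeo.isEmbedding.t2Space
  refine IsCompact.isClosed ?_
  rwa [Subtype.isCompact_iff, Subtype.image_preimage_coe, inter_eq_right.2 hKT]

theorem compl_mem_nhdsWithin {K : Set X} (hK : IsCompact K) (hKT : K ⊆ T.carrier) {x : X}
    (hx : x ∈ T.carrier) (hxK : x ∉ K) : Kᶜ ∈ 𝓝[T.carrier] x :=
  (preimage_coe_mem_nhds_subtype (a := ⟨x, hx⟩)).1
    ((T.isClosed_preimage_val hK hKT).isOpen_compl.mem_nhds hxK)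

end SolidTorus

/-- A point of the interior of the torus with a neighbourhood in a chamber is an interior point
of the chamber. -/
theorem Chamber.interior_of_mem_nhdsWithin (T : SolidTorus X) (C : Chamber X) {p : X}
    (hp : p ∈ T.intr) (hC : C.carrier ∈ 𝓝[T.carrier] p) :
    ‖((setCoord C.homeo p).1 : ℂ)‖ ≠ 1 ∧ (setCoord C.homeo p).2 ≠ 0 ∧
      (setCoord C.homeo p).2 ≠ 1 := by
  have h := T.image_mem_nhds (F := ℂ × ℝ) (by simp) (V := C.carrier)
    (g := fun x => (((setCoord C.homeo x).1 : ℂ), ((setCoord C.homeo x).2 : ℝ))) hp hC (by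
      have h1 : Continuous fun y : Cylinder => ((y.1 : ℂ), (y.2 : ℝ)) := by fun_prop
      exact h1.comp_continuousOn (continuousOn_setCoord C.homeo)) (by
      intro x hx y hy h
      refine injOn_setCoord C.homeo hx hy ?_
      rw [Prod.mk.injEq] at h
      exact Prod.ext (Subtype.ext h.1) (Subtype.ext h.2))
  have h2 : Metric.closedBall (0 : ℂ) 1 ×ˢ Icc (0 : ℝ) 1 ∈
      𝓝 ((((setCoord C.homeo p).1 : ℂ), ((setCoord C.homeo p).2 : ℝ))) := by
    refine Filter.mem_of_superset h ?_
    rintro _ ⟨x, -, rfl⟩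
    exact ⟨(setCoord C.homeo x).1.2, (setCoord C.homeo x).2.2⟩
  rw [← mem_interior_iff_mem_nhds, interior_prod_eq, interior_closedBall _ one_ne_zero,
    interior_Icc] at h2
  refine ⟨(mem_ball_zero_iff.1 h2.1).ne, fun h => ?_, fun h => ?_⟩
  · have := h2.2.1
    simp only [h] at this
    exact lt_irrefl _ this
  · have := h2.2.2
    simp only [h] at this
    exact lt_irrefl _ this

/-- The chamber `C` is cut off the solid torus `T` by the meridional disc `D`, which is its
bottom, together with a disjoint compact set `Q` containing its top. -/
structure IsCutOff (T : SolidTorus X) (C : Chamber X) (D : MeridionalDisc T) (Q : Set X) :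
    Prop where
  subset : C.carrier ⊆ T.carrier
  bot_eq : C.bot = D.carrier
  top_subset : C.top ⊆ Q
  isCompact : IsCompact Q
  subset_torus : Q ⊆ T.carrier
  disjoint : Disjoint D.carrier Q
  mem_nhdsWithin : ∀ x ∈ C.carrier, x ∉ D.carrier → x ∉ Q → C.carrier ∈ 𝓝[T.carrier] x

namespace IsCutOff

variable {T : SolidTorus X} {C : Chamber X} {D : MeridionalDisc T} {Q : Set X}

theorem mem_disc (h : IsCutOff T C D Q) {x : X} :
    x ∈ D.carrier ↔ x ∈ C.carrier ∧ (setCoord C.homeo x).2 = 0 := by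
  rw [← h.bot_eq, C.mem_bot]

theorem norm_ne_one_of_mem_disc (h : IsCutOff T C D Q) {x : X} (hx : x ∈ D.carrier)
    (hxT : x ∈ T.intr) : ‖((setCoord C.homeo x).1 : ℂ)‖ ≠ 1 := by
  let f : ↥Disc2 → ↥Disc2 := fun z => (setCoord C.homeo (setParam D.homeo z)).1
  have hmem : ∀ z, setParam D.homeo z ∈ C.carrier ∧
      (setCoord C.homeo (setParam D.homeo z)).2 = 0 :=
    fun z => h.mem_disc.1 (setParam_mem _ z)
  have hf : Continuous f := continuous_fst.comp
    ((continuousOn_setCoord C.homeo).comp_continuous (continuous_setParam D.homeo)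
      fun z => (hmem z).1)
  have hinj : Function.Injective f := by
    intro z w hzw
    refine setParam_injective D.homeo (injOn_setCoord C.homeo (hmem z).1 (hmem w).1 ?_)
    exact Prod.ext hzw ((hmem z).2.trans (hmem w).2.symm)
  have hlt : ‖((setCoord D.homeo x : ↥Disc2) : ℂ)‖ < 1 := by
    refine lt_of_le_of_ne (Disc2.norm_le _) fun h1 => ?_
    have h2 : x ∈ D.bdry := by
      rw [D.bdry_spec, mem_image_val_preimage]
      exact ⟨hx, h1⟩
    rw [← D.inter_bdry] at h2
    exact (T.mem_intr.1 hxT).2.ne (T.mem_bdry.1 h2.2).2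
  have h3 := (Disc2.isOpen_image_interior hf hinj).2 _ hlt
  simp only [f, setParam_setCoord D.homeo hx] at h3
  exact h3.ne

theorem interior_of_notMem (h : IsCutOff T C D Q) {x : X} (hxC : x ∈ C.carrier)
    (hxT : x ∈ T.intr) (hxQ : x ∉ Q) : ‖((setCoord C.homeo x).1 : ℂ)‖ ≠ 1 ∧
      (setCoord C.homeo x).2 ≠ 1 := by
  refine ⟨?_, fun h1 => hxQ (h.top_subset (C.mem_top.2 ⟨hxC, h1⟩))⟩
  by_cases hxD : x ∈ D.carrier
  · exact h.norm_ne_one_of_mem_disc hxD hxT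
  · exact (C.interior_of_mem_nhdsWithin T hxT (h.mem_nhdsWithin x hxC hxD hxQ)).1

theorem subset_or_disjoint (h : IsCutOff T C D Q) {s : Set X} (hs : IsPreconnected s)
    (hsT : s ⊆ T.carrier) (hsD : Disjoint s D.carrier) (hsQ : Disjoint s Q) :
    s ⊆ C.carrier ∨ Disjoint s C.carrier := by
  have hs' : IsPreconnected ((↑) ⁻¹' s : Set ↥T.carrier) := by
    rw [← Topology.IsInducing.subtypeVal.isPreconnected_image, Subtype.image_preimage_coe,
      inter_eq_right.2 hsT]
    exact hs
  have hC := T.isClosed_preimage_val (isCompact_of_homeomorph C.homeo) h.subset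
  rcases hs'.subset_or_subset (isOpen_interior (s := ((↑) ⁻¹' C.carrier : Set ↥T.carrier)))
    hC.isOpen_compl (disjoint_compl_right.mono_left interior_subset) (by
      intro x hx
      by_cases hxC : (x : X) ∈ C.carrier
      · refine Or.inl (mem_interior_iff_mem_nhds.2 (preimage_coe_mem_nhds_subtype.2 ?_))
        exact h.mem_nhdsWithin x hxC (disjoint_left.1 hsD hx) (disjoint_left.1 hsQ hx)
      · exact Or.inr hxC) with h1 | h1
  · exact Or.inl fun x hx =>
      (interior_subset (h1 (show (⟨x, hsT hx⟩ : ↥T.carrier) ∈ _ from hx)) :)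
  · exact Or.inr (disjoint_left.2 fun x hx =>
      h1 (show (⟨x, hsT hx⟩ : ↥T.carrier) ∈ _ from hx))

end IsCutOff

theorem mem_closedBall_zero_prod {v : ℝ × ℝ × ℝ} {r : ℝ} : v ∈ Metric.closedBall 0 r ↔
    v.1 ∈ Icc (-r) r ∧ v.2.1 ∈ Icc (-r) r ∧ v.2.2 ∈ Icc (-r) r := by
  simp only [mem_closedBall_zero_iff, Prod.norm_def, sup_le_iff, Real.norm_eq_abs, abs_le, mem_Icc]

namespace IsCutOff

variable {T : SolidTorus X} {C : Chamber X} {D : MeridionalDisc T} {Q : Set X}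

/-- The local push at a transverse intersection point, given box coordinates whose upper half
lies in the chamber and whose lower half lies outside of it. -/
theorem exists_push_of_box (h : IsCutOff T C D Q) {L : Set X} {f : ℝ × ℝ × ℝ → X}
    (hf : IsOpenEmbedding f) (hD : ∀ v, f v ∈ D.carrier ↔ v.2.2 = 0)
    (hL : ∀ v, f v ∈ L ↔ v.1 = 0 ∧ v.2.1 = 0) {r : ℝ} (hr : 0 < r)
    (hinner : ∀ v ∈ Metric.closedBall 0 r, f v ∈ C.carrier →
      ‖((setCoord C.homeo (f v)).1 : ℂ)‖ ≠ 1 ∧ (setCoord C.homeo (f v)).2 ≠ 1)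
    (hup : ∀ v ∈ Metric.closedBall 0 r, 0 < v.2.2 → f v ∈ C.carrier)
    (hlow : ∀ v ∈ Metric.closedBall 0 r, v.2.2 < 0 → f v ∉ C.carrier) :
    ∃ k, IsBottomPush (setParam C.homeo ⁻¹' L) k ∧ (k (setCoord C.homeo (f 0))).2 ≠ 0 := by
  have hN : ∀ v ∈ Icc (-r) r ×ˢ Icc (-r) r ×ˢ Icc 0 r, v ∈ Metric.closedBall 0 r ∧
      f v ∈ C.carrier := by
    rintro v ⟨h1, h2, h3⟩
    have hv : v ∈ Metric.closedBall 0 r :=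
      mem_closedBall_zero_prod.2 ⟨h1, h2, by linarith [h3.1], h3.2⟩
    refine ⟨hv, ?_⟩
    rcases h3.1.eq_or_lt with h4 | h4
    · exact (h.mem_disc.1 ((hD v).2 h4.symm)).1
    · exact hup v hv h4
  refine IsBottomPush.exists_of_halfBox hr (ψ := fun v => setCoord C.homeo (f v))
    ((continuousOn_setCoord C.homeo).comp hf.continuous.continuousOn fun v hv => (hN v hv).2)
    (fun v hv w hw hvw => hf.injective (injOn_setCoord C.homeo (hN v hv).2 (hN w hw).2 hvw))
    ?_ ?_ ?_ (fun v hv => (hinner v (hN v hv).1 (hN v hv).2).2)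
    (fun v hv => (hinner v (hN v hv).1 (hN v hv).2).1)
  · have : (fun v => setCoord C.homeo (f v)) '' (Ioo (-r) r ×ˢ Ioo (-r) r ×ˢ Ico 0 r) =
        setParam C.homeo ⁻¹' (f '' (Ioo (-r) r ×ˢ Ioo (-r) r ×ˢ Ioo (-r) r)) := by
      ext y
      constructor
      · rintro ⟨v, ⟨h1, h2, h3⟩, rfl⟩
        have hvC := (hN v ⟨Ioo_subset_Icc_self h1, Ioo_subset_Icc_self h2,
          Ico_subset_Icc_self h3⟩).2
        refine ⟨v, ⟨h1, h2, by linarith [h3.1], h3.2⟩, ?_⟩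
        exact (setParam_setCoord C.homeo hvC).symm
      · rintro ⟨v, ⟨h1, h2, h3⟩, hv⟩
        refine ⟨v, ⟨h1, h2, not_lt.1 fun h4 => ?_, h3.2⟩, ?_⟩
        · refine hlow v (mem_closedBall_zero_prod.2 ⟨Ioo_subset_Icc_self h1,
            Ioo_subset_Icc_self h2, Ioo_subset_Icc_self h3⟩) h4 ?_
          rw [hv]
          exact setParam_mem _ _
        · simp only [hv, setCoord_setParam]
    rw [this]
    exact (hf.isOpenMap _ (isOpen_Ioo.prod (isOpen_Ioo.prod isOpen_Ioo))).preimage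
      (continuous_setParam C.homeo)
  · intro v hv
    rw [mem_preimage, setParam_setCoord C.homeo (hN v hv).2, hL]
  · intro v hv
    rw [← hD, h.mem_disc]
    exact ⟨fun h => ⟨(hN v hv).2, h⟩, fun h => h.2⟩

/-- The local push at a transverse intersection point. -/
theorem exists_push (h : IsCutOff T C D Q) {L : Set X} {p : X} (hpD : p ∈ D.carrier)
    (hpT : p ∈ T.intr) (hpL : p ∈ L) (htr : TransverseAt D.carrier L p) :
    ∃ k, IsBottomPush (setParam C.homeo ⁻¹' L) k ∧ (k (setCoord C.homeo p)).2 ≠ 0 := by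
  obtain ⟨U, φ, hU, hpU, hφD, hφL⟩ := htr
  let ι : ℝ × ℝ × ℝ → EuclideanSpace ℝ (Fin 3) := fun v => !₂[v.1, v.2.1, v.2.2]
  have hι : Continuous ι := by fun_prop
  let ε : (ℝ × ℝ × ℝ) ≃ₜ EuclideanSpace ℝ (Fin 3) :=
    { toFun := ι
      invFun := fun w => (w 0, w 1, w 2)
      left_inv := fun v => rfl
      right_inv := fun w => by ext i; fin_cases i <;> rfl
      continuous_toFun := hι
      continuous_invFun := by fun_prop }
  let f : ℝ × ℝ × ℝ → X := fun v => φ.symm (ε v)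
  have hf : IsOpenEmbedding f :=
    hU.isOpenEmbedding_subtypeVal.comp (φ.symm.isOpenEmbedding.comp ε.isOpenEmbedding)
  have hmem : ∀ (S : Set X) (v : ℝ × ℝ × ℝ),
      f v ∈ S ↔ ε v ∈ φ '' {y : ↥U | (y : X) ∈ S} := by
    intro S v
    constructor
    · exact fun hv => ⟨φ.symm (ε v), hv, φ.apply_symm_apply _⟩
    · rintro ⟨y, hy, hyv⟩
      simp only [f, ← hyv, φ.symm_apply_apply]
      exact hy
  have hD : ∀ v, f v ∈ D.carrier ↔ v.2.2 = 0 := fun v => by rw [hmem, hφD]; rfl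
  have hL : ∀ v, f v ∈ L ↔ v.1 = 0 ∧ v.2.1 = 0 := fun v => by rw [hmem, hφL]; rfl
  have hf0 : f 0 = p := by
    have hp : f (ε.symm (φ ⟨p, hpU⟩)) = p := by simp [f]
    have h1 := (hD _).1 (hp.symm ▸ hpD)
    have h2 := (hL _).1 (hp.symm ▸ hpL)
    rw [← hp]
    exact congrArg f (Prod.ext h2.1.symm (Prod.ext h2.2.symm h1.symm))
  have hpC := h.mem_disc.1 hpD
  have hpT' := T.intr_subset hpT
  -- The coordinates of points of the torus near `p` fill a neighbourhood of the origin.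
  have hfT : ∀ᶠ v in 𝓝 0, f v ∈ T.carrier := by
    let e := hf.toOpenPartialHomeomorph f
    have he : ∀ v, e.symm (f v) = v := fun v => hf.toOpenPartialHomeomorph_left_inv
    have h1 := T.image_mem_nhds (F := ℝ × ℝ × ℝ) (by simp) (V := range f ∩ T.carrier)
      (g := e.symm) hpT
      (Filter.inter_mem (mem_nhdsWithin_of_mem_nhds
        (hf.isOpen_range.mem_nhds ⟨0, hf0⟩)) self_mem_nhdsWithin)
      (e.continuousOn_symm.mono fun x hx => by simpa [e] using hx.1)
      (by
        rintro _ ⟨⟨v, rfl⟩, -⟩ _ ⟨⟨w, rfl⟩, -⟩ hvw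
        rw [he, he] at hvw
        rw [hvw])
    rw [← hf0, he] at h1
    filter_upwards [h1] with v hv
    obtain ⟨_, ⟨⟨w, rfl⟩, hw⟩, rfl⟩ := hv
    rwa [he]
  have hft : Filter.Tendsto f (𝓝 0) (𝓝[T.carrier] p) :=
    tendsto_nhdsWithin_iff.2 ⟨hf0 ▸ hf.continuous.tendsto 0, hfT⟩
  have hfQ : ∀ᶠ v in 𝓝 0, f v ∉ Q :=
    hft (T.compl_mem_nhdsWithin h.isCompact h.subset_torus hpT' (disjoint_left.1 h.disjoint hpD))
  have hfi : ∀ᶠ v in 𝓝 0, f v ∈ T.intr := by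
    have ho : ∀ᶠ x in 𝓝[T.carrier] p, ‖((setCoord T.homeo x).1 : ℂ)‖ < 1 := by
      have h1 : ContinuousWithinAt (fun x => ‖((setCoord T.homeo x).1 : ℂ)‖) T.carrier p := by
        have h2 : Continuous fun y : ↥Disc2 × Circle => ‖(y.1 : ℂ)‖ := by fun_prop
        exact (h2.comp_continuousOn (continuousOn_setCoord T.homeo)) p hpT'
      exact h1.eventually_lt continuousWithinAt_const (T.mem_intr.1 hpT).2
    filter_upwards [hfT, hft ho] with v hv1 hv2
    exact T.mem_intr.2 ⟨hv1, hv2⟩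
  obtain ⟨r, hr, hrball⟩ := Metric.nhds_basis_closedBall.mem_iff.1 (hfQ.and hfi)
  have hinner : ∀ v ∈ Metric.closedBall 0 r, f v ∈ C.carrier →
      ‖((setCoord C.homeo (f v)).1 : ℂ)‖ ≠ 1 ∧ (setCoord C.homeo (f v)).2 ≠ 1 :=
    fun v hv hvC => h.interior_of_notMem hvC (hrball hv).2 (hrball hv).1
  have hhalf : ∀ s : Set (ℝ × ℝ × ℝ), Convex ℝ s → s ⊆ Metric.closedBall 0 r →
      (∀ v ∈ s, v.2.2 ≠ 0) → f '' s ⊆ C.carrier ∨ Disjoint (f '' s) C.carrier := by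
    intro s hs hsr hs0
    refine h.subset_or_disjoint (hs.isPreconnected.image _ hf.continuous.continuousOn) ?_ ?_ ?_
    · rintro _ ⟨v, hv, rfl⟩
      exact T.intr_subset (hrball (hsr hv)).2
    · refine disjoint_left.2 ?_
      rintro _ ⟨v, hv, rfl⟩ hvD
      exact hs0 v hv ((hD v).1 hvD)
    · refine disjoint_left.2 ?_
      rintro _ ⟨v, hv, rfl⟩
      exact (hrball (hsr hv)).1
  have hlin : IsLinearMap ℝ fun v : ℝ × ℝ × ℝ => v.2.2 := ⟨fun _ _ => rfl, fun _ _ => rfl⟩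
  have hupper := hhalf (Metric.closedBall 0 r ∩ {v | 0 < v.2.2})
    ((convex_closedBall _ _).inter (convex_halfSpace_gt hlin 0)) inter_subset_left
    fun v hv => hv.2.ne'
  have hlower := hhalf (Metric.closedBall 0 r ∩ {v | v.2.2 < 0})
    ((convex_closedBall _ _).inter (convex_halfSpace_lt hlin 0)) inter_subset_left
    fun v hv => hv.2.ne
  have hnot : ¬ (f '' (Metric.closedBall 0 r ∩ {v | 0 < v.2.2}) ⊆ C.carrier ∧
      f '' (Metric.closedBall 0 r ∩ {v | v.2.2 < 0}) ⊆ C.carrier) := by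
    rintro ⟨h1, h2⟩
    have h3 : C.carrier ∈ 𝓝[T.carrier] p := by
      refine mem_nhdsWithin_of_mem_nhds (Filter.mem_of_superset (hf0 ▸ hf.isOpenMap.image_mem_nhds
        (Metric.closedBall_mem_nhds 0 hr)) ?_)
      rintro _ ⟨v, hv, rfl⟩
      rcases lt_trichotomy v.2.2 0 with h4 | h4 | h4
      · exact h2 ⟨v, ⟨hv, h4⟩, rfl⟩
      · exact (h.mem_disc.1 ((hD v).2 h4)).1
      · exact h1 ⟨v, ⟨hv, h4⟩, rfl⟩
    exact (C.interior_of_mem_nhdsWithin T hpT h3).2.1 hpC.2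
  have hex : ∃ v ∈ Metric.closedBall 0 r, f v ∈ C.carrier ∧ v.2.2 ≠ 0 := by
    let γ : unitInterval → X := fun t => setParam C.homeo ((setCoord C.homeo p).1, t)
    have hγ : Continuous γ := (continuous_setParam C.homeo).comp (by fun_prop)
    have hγ0 : γ 0 = p := by
      simp only [γ]
      rw [← hpC.2]
      exact setParam_setCoord C.homeo hpC.1
    have hn : γ ⁻¹' (f '' Metric.closedBall 0 r) ∈ 𝓝 (0 : unitInterval) := by
      refine hγ.continuousAt.preimage_mem_nhds ?_
      rw [hγ0]
      exact hf0 ▸ hf.isOpenMap.image_mem_nhds (Metric.closedBall_mem_nhds 0 hr)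
    have hne : (𝓝[>] (0 : unitInterval)).NeBot := nhdsGT_neBot_of_exists_gt ⟨1, zero_lt_one⟩
    obtain ⟨t, ⟨v, hv, hvt⟩, ht⟩ := hne.nonempty_of_mem
      (Filter.inter_mem (mem_nhdsWithin_of_mem_nhds hn) self_mem_nhdsWithin)
    refine ⟨v, hv, ?_, fun h0 => ?_⟩
    · rw [hvt]; exact setParam_mem _ _
    · have h1 := (h.mem_disc.1 ((hD v).2 h0)).2
      simp only [hvt, γ, setCoord_setParam] at h1
      exact (ne_of_gt ht) h1
  obtain ⟨v, hv, hvC, hv0⟩ := hex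
  rw [← hf0]
  rcases hv0.lt_or_gt with hv0 | hv0
  · let τ : (ℝ × ℝ × ℝ) ≃ₜ (ℝ × ℝ × ℝ) :=
      (Homeomorph.refl ℝ).prodCongr ((Homeomorph.refl ℝ).prodCongr (Homeomorph.neg ℝ))
    have hτ : ∀ w ∈ Metric.closedBall 0 r, τ w ∈ Metric.closedBall (0 : ℝ × ℝ × ℝ) r := by
      intro w hw
      rw [mem_closedBall_zero_prod] at hw ⊢
      refine ⟨hw.1, hw.2.1, neg_le_neg hw.2.2.2, ?_⟩
      exact neg_le.1 hw.2.2.1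
    have hlowC : f '' (Metric.closedBall 0 r ∩ {v | v.2.2 < 0}) ⊆ C.carrier :=
      hlower.resolve_right fun hd => disjoint_left.1 hd ⟨v, ⟨hv, hv0⟩, rfl⟩ hvC
    have hupC := hupper.resolve_left fun h1 => hnot ⟨h1, hlowC⟩
    have := h.exists_push_of_box (L := L) (f := f ∘ τ) (hf.comp τ.isOpenEmbedding)
      (fun w => (hD _).trans neg_eq_zero) (fun w => hL _) hr
      (fun w hw hwC => hinner _ (hτ w hw) hwC)
      (fun w hw hw0 => hlowC ⟨τ w, ⟨hτ w hw, neg_neg_iff_pos.2 hw0⟩, rfl⟩)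
      (fun w hw hw0 => disjoint_left.1 hupC ⟨τ w, ⟨hτ w hw, neg_pos.2 hw0⟩, rfl⟩)
    have hτ0 : τ 0 = 0 := Prod.ext rfl (Prod.ext rfl neg_zero)
    simpa only [Function.comp, hτ0] using this
  · have hupC : f '' (Metric.closedBall 0 r ∩ {v | 0 < v.2.2}) ⊆ C.carrier :=
      hupper.resolve_right fun hd => disjoint_left.1 hd ⟨v, ⟨hv, hv0⟩, rfl⟩ hvC
    have hlowC := hlower.resolve_left fun h1 => hnot ⟨hupC, h1⟩
    exact h.exists_push_of_box hf hD hL hr hinner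
      (fun w hw hw0 => hupC ⟨w, ⟨hw, hw0⟩, rfl⟩)
      (fun w hw hw0 => disjoint_left.1 hlowC ⟨w, ⟨hw, hw0⟩, rfl⟩)

end IsCutOff

namespace IsCutOff

variable {T : SolidTorus X} {C : Chamber X} {D : MeridionalDisc T} {Q : Set X}

/-- The link can be avoided while pushing the chamber off its bottom. -/
theorem exists_push_off_bottom (h : IsCutOff T C D Q) {L : Set X} (hLc : IsCompact L)
    (hLT : L ⊆ T.intr) (hfin : (L ∩ D.carrier).Finite) (htr : MeetsTransversally D.carrier L) :
    ∃ g, IsBottomPush (setParam C.homeo ⁻¹' L) g ∧ ∀ y, (g y).2 ≠ 0 := by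
  have hmem : ∀ y : Cylinder, y.2 = 0 → setParam C.homeo y ∈ D.carrier := fun y hy =>
    h.mem_disc.2 ⟨setParam_mem _ _, by rwa [setCoord_setParam]⟩
  refine IsBottomPush.exists_off_bottom ?_ ?_ ?_
  · let k : Cylinder → ↥T.carrier := fun y =>
      ⟨setParam C.homeo y, h.subset (setParam_mem _ _)⟩
    have hk : Continuous k := (continuous_setParam C.homeo).subtype_mk _
    exact (T.isClosed_preimage_val hLc (hLT.trans T.intr_subset)).preimage hk
  · refine (hfin.image (setCoord C.homeo)).subset ?_
    rintro y ⟨hyL, hy0⟩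
    exact ⟨setParam C.homeo y, ⟨hyL, hmem y hy0⟩, setCoord_setParam _ _⟩
  · intro y hyL hy0
    have := h.exists_push (hmem y hy0) (hLT hyL) hyL (htr _ ⟨hmem y hy0, hyL⟩)
    rwa [setCoord_setParam] at this

/-- A disc in the chamber with boundary in the bottom meets the link at least as often as the
subdisc of the bottom with the same boundary. -/
theorem encard_le (h : IsCutOff T C D Q) {L : Set X} (hLc : IsCompact L)
    (hLT : L ⊆ T.intr) {n : ℕ} (hn : (L ∩ D.carrier).encard = n)
    (htr : MeetsTransversally D.carrier L)
    (hidx : (n : ℕ∞) ≤ chamberIndex (L ∩ C.carrier) C)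
    {D' : Set X} (e' : ↥D' ≃ₜ ↥Disc2) (hD'C : D' ⊆ C.carrier) (hD'T : D' ⊆ T.intr)
    (hD'Q : Disjoint D' Q)
    (hD'D : D' ∩ D.carrier = Subtype.val '' (e' ⁻¹' {p | ‖(p : ℂ)‖ = 1}))
    {D'' : Set X} (e'' : ↥D'' ≃ₜ ↥Disc2) (hD''D : D'' ⊆ D.carrier)
    (hbd : Subtype.val '' (e'' ⁻¹' {p | ‖(p : ℂ)‖ = 1}) =
      Subtype.val '' (e' ⁻¹' {p | ‖(p : ℂ)‖ = 1})) :
    (L ∩ D'').encard ≤ (L ∩ D').encard := by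
  have hfin : (L ∩ D.carrier).Finite := finite_of_encard_eq_coe hn
  obtain ⟨G, hG, hG0⟩ := h.exists_push_off_bottom hLc hLT hfin htr
  let d' : ↥Disc2 → Cylinder := fun z => setCoord C.homeo (setParam e' z)
  have hC' : ∀ z, setParam e' z ∈ C.carrier := fun z => hD'C (setParam_mem _ z)
  have hd' : Continuous d' :=
    (continuousOn_setCoord C.homeo).comp_continuous (continuous_setParam e') hC'
  have hd'inj : Function.Injective d' := fun z w hzw =>
    setParam_injective e' (injOn_setCoord C.homeo (hC' z) (hC' w) hzw)
  have hinner : ∀ z, ‖((d' z).1 : ℂ)‖ ≠ 1 ∧ (d' z).2 ≠ 1 := fun z =>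
    h.interior_of_notMem (hC' z) (hD'T (setParam_mem _ z))
      (disjoint_left.1 hD'Q (setParam_mem _ z))
  have hbot' : ∀ z, (d' z).2 = 0 ↔ ‖(z : ℂ)‖ = 1 := by
    intro z
    have h1 : setParam e' z ∈ D' ∩ D.carrier ↔ ‖(z : ℂ)‖ = 1 := by
      rw [hD'D, mem_image_val_preimage, setCoord_setParam]
      exact and_iff_right (setParam_mem _ z)
    rw [← h1, mem_inter_iff, h.mem_disc]
    exact ⟨fun h => ⟨setParam_mem _ z, hC' z, h⟩, fun h => h.2.2⟩
  have hC'' : ∀ z, setParam e'' z ∈ C.carrier ∧ (setCoord C.homeo (setParam e'' z)).2 = 0 :=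
    fun z => h.mem_disc.1 (hD''D (setParam_mem _ z))
  let d'' : ↥Disc2 → ↥Disc2 := fun z => (setCoord C.homeo (setParam e'' z)).1
  have hd''eq : ∀ z, setCoord C.homeo (setParam e'' z) = (d'' z, 0) := fun z =>
    Prod.ext rfl (hC'' z).2
  have hd'' : Continuous d'' := continuous_fst.comp
    ((continuousOn_setCoord C.homeo).comp_continuous (continuous_setParam e'')
      fun z => (hC'' z).1)
  have hd''inj : Function.Injective d'' := fun z w hzw =>
    setParam_injective e'' (injOn_setCoord C.homeo (hC'' z).1 (hC'' w).1
      (by rw [hd''eq, hd''eq, hzw]))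
  have hbd'' : ∀ z : ↥Disc2, ‖(z : ℂ)‖ = 1 → setParam e'' z ∈ D' := by
    intro z hz
    have h1 : setParam e'' z ∈ Subtype.val '' (e'' ⁻¹' {p | ‖(p : ℂ)‖ = 1}) := by
      rw [mem_image_val_preimage, setCoord_setParam]
      exact ⟨setParam_mem _ z, hz⟩
    rw [hbd, ← hD'D] at h1
    exact h1.1
  have hside'' : ∀ z, ‖(d'' z : ℂ)‖ ≠ 1 := by
    intro z
    rcases (Disc2.norm_le z).lt_or_eq with hz | hz
    · exact ((Disc2.isOpen_image_interior hd'' hd''inj).2 z hz).ne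
    · exact h.norm_ne_one_of_mem_disc (hD''D (setParam_mem _ z)) (hD'T (hbd'' z hz))
  obtain ⟨g, hgc, hginj, hgmem, hgbd, hgside, hgtop⟩ := Disc2.exists_surgery hd' hd'inj hd''
    hd''inj hbot' (fun z => (hinner z).2) (fun z => (hinner z).1) hside'' (by
      intro z hz
      refine ⟨setCoord e' (setParam e'' z), ?_⟩
      simp only [d', setParam_setCoord e' (hbd'' z hz), hd''eq])
  obtain ⟨M, hM⟩ := C.exists_interiorMeridionalDisc (E := G ∘ g) (hG.continuous.comp hgc)
    (hG.injective.comp hginj) (fun x => hG0 _)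
    (fun x h1 => hgtop x (by
      have h2 := hG.eq_of_one _ h1
      rw [← h2]
      exact h1))
    (fun x hx => hgside x (hG.side_of_side _ hx))
    (fun x hx => by
      have h1 := hgbd x hx
      have h2 := hG.fst_eq (g x) (by rw [h1]; exact hx)
      rw [h1] at h2
      simp only [Function.comp, h1, h2])
  have hlow : (n : ℕ∞) ≤ (L ∩ M.carrier).encard := by
    refine hidx.trans ((iInf_le _ M).trans (encard_le_encard ?_))
    exact inter_subset_inter_left _ inter_subset_left
  have hcount : (L ∩ M.carrier).encard ≤ (L ∩ (D.carrier \ D'')).encard + (L ∩ D').encard := by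
    have h1 : L ∩ M.carrier ⊆
        (setParam C.homeo ∘ G ∘ g) '' {x | setParam C.homeo (g x) ∈ L} := by
      rw [hM]
      rintro _ ⟨hx, x, rfl⟩
      exact ⟨x, hG.mem_of_mem _ hx, rfl⟩
    have h2 : setParam C.homeo ∘ g '' {x | setParam C.homeo (g x) ∈ L} ⊆
        (L ∩ (D.carrier \ D'')) ∪ (L ∩ D') := by
      rintro _ ⟨x, hx, rfl⟩
      rcases hgmem x with ⟨z, hz⟩ | ⟨hxr, hgx⟩
      · refine Or.inr ⟨hx, ?_⟩
        simp only [Function.comp, ← hz, d', setParam_setCoord C.homeo (hC' z)]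
        exact setParam_mem _ z
      · refine Or.inl ⟨hx, h.mem_disc.2 ⟨setParam_mem _ _, ?_⟩, fun hxD => hxr ?_⟩
        · rw [Function.comp, setCoord_setParam, hgx]
        · refine ⟨setCoord e'' (setParam C.homeo (g x)), ?_⟩
          have h3 := setParam_setCoord e'' hxD
          simp only [Function.comp, d''] at h3 ⊢
          rw [h3, setCoord_setParam, hgx]
    calc (L ∩ M.carrier).encard
        ≤ {x | setParam C.homeo (g x) ∈ L}.encard :=
          (encard_le_encard h1).trans (encard_image_le _ _)
      _ = (setParam C.homeo ∘ g '' {x | setParam C.homeo (g x) ∈ L}).encard :=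
          (((setParam_injective C.homeo).comp hginj).encard_image _).symm
      _ ≤ _ := (encard_le_encard h2).trans (encard_union_le _ _)
  have hsplit : (L ∩ D.carrier).encard =
      (L ∩ (D.carrier \ D'')).encard + (L ∩ D'').encard := by
    rw [← encard_union_eq]
    · congr 1
      rw [← inter_union_distrib_left, sdiff_union_of_subset hD''D]
    · exact disjoint_left.2 fun x hx hx' => hx.2.2 hx'.2
  have hne : (L ∩ (D.carrier \ D'')).encard ≠ ⊤ := by
    refine (hfin.subset (inter_subset_inter_right _ sdiff_subset)).encard_lt_top.ne
  refine (ENat.add_le_add_iff_left hne).1 ?_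
  rw [← hsplit, hn]
  exact hlow.trans hcount

end IsCutOff

theorem IsLink.isCompact {L : Set X} (hL : IsLink L) : IsCompact L := by
  obtain ⟨k, c, hc, -, rfl⟩ := hL
  exact isCompact_iUnion fun i => isCompact_of_homeomorph (hc i).some

namespace Chamber

variable (C : Chamber X)

/-- The chamber with its top and its bottom exchanged. -/
def flip : Chamber X where
  carrier := C.carrier
  homeo := C.homeo.trans ((Homeomorph.refl _).prodCongr unitInterval.symmHomeomorph)

theorem setCoord_flip {x : X} (hx : x ∈ C.carrier) :
    setCoord C.flip.homeo x =
      ((setCoord C.homeo x).1, unitInterval.symm (setCoord C.homeo x).2) := by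
  rw [setCoord_of_mem C.homeo hx, setCoord_of_mem C.flip.homeo (show x ∈ C.flip.carrier from hx)]
  rfl

theorem flip_top : C.flip.top = C.bot := by
  ext x
  rw [mem_top, mem_bot]
  refine and_congr_right fun hx => ?_
  rw [C.setCoord_flip hx]
  simp

theorem flip_bot : C.flip.bot = C.top := by
  ext x
  rw [mem_top, mem_bot]
  refine and_congr_right fun hx => ?_
  rw [C.setCoord_flip hx]
  simp

theorem flip_bdry : C.flip.bdry = C.bdry := by
  ext x
  rw [mem_bdry, mem_bdry]
  refine and_congr_right fun hx => ?_
  rw [C.setCoord_flip hx]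
  simp [or_comm]

theorem flip_sideAnnulus : C.flip.sideAnnulus = C.sideAnnulus := by
  rw [sideAnnulus, sideAnnulus, flip_bdry, flip_top, flip_bot, union_comm]

theorem chamberIndex_le_flip (L : Set X) : chamberIndex L C ≤ chamberIndex L C.flip := by
  refine le_iInf fun M => ?_
  let M' : InteriorMeridionalDisc C :=
    { carrier := M.carrier
      subset := by
        have h := M.subset
        rw [flip_top, flip_bot, union_comm] at h
        exact h
      homeo := M.homeo
      bdry := M.bdry
      bdry_spec := M.bdry_spec
      inter_bdry := by rw [← C.flip_bdry]; exact M.inter_bdry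
      bdry_sub := by rw [← C.flip_sideAnnulus]; exact M.bdry_sub
      essential := by rw [← C.flip_sideAnnulus]; exact M.essential }
  exact iInf_le (fun M : InteriorMeridionalDisc C => (L ∩ M.carrier).encard) M'

end Chamber

namespace ChamberSystem

variable {T : SolidTorus X} {m : ℕ} (S : ChamberSystem T m)

theorem isCompact_disc (i : Fin m) : IsCompact (S.disc i).carrier :=
  isCompact_of_homeomorph (S.disc i).homeo

theorem isCompact_chamber (i : Fin m) : IsCompact (S.chamber i).carrier :=
  isCompact_of_homeomorph (S.chamber i).homeo

theorem mem_disc {i : Fin m} {x : X} : x ∈ (S.disc i).carrier ↔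
    x ∈ (S.chamber i).carrier ∧ (setCoord (S.chamber i).homeo x).2 = 0 := by
  rw [← S.bot_eq, Chamber.mem_bot]

theorem mem_disc_finRotate {i : Fin m} {x : X} : x ∈ (S.disc (finRotate m i)).carrier ↔
    x ∈ (S.chamber i).carrier ∧ (setCoord (S.chamber i).homeo x).2 = 1 := by
  rw [← S.top_eq, Chamber.mem_top]

theorem finRotate_ne {T : SolidTorus X} {m : ℕ} (S : ChamberSystem T m) (i : Fin m) :
    finRotate m i ≠ i := by
  intro h
  let x := setParam (S.chamber i).homeo (⟨0, by simp⟩, 0)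
  have h0 : x ∈ (S.disc i).carrier := S.mem_disc.2 ⟨setParam_mem _ _, by simp [x]⟩
  have h1 := h0
  rw [← h] at h1
  exact zero_ne_one ((S.mem_disc.1 h0).2.symm.trans (S.mem_disc_finRotate.1 h1).2)

theorem eq_of_mem_disc {i j : Fin m} {x : X} (hi : x ∈ (S.disc i).carrier)
    (hj : x ∈ (S.disc j).carrier) : i = j := by
  by_contra h
  exact disjoint_left.1 (S.disc_disjoint h) hi hj

/-- The union of all discs of the system but one. -/
def otherDiscs (i : Fin m) : Set X := ⋃ j : {j // j ≠ i}, (S.disc j).carrier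

theorem mem_otherDiscs {i : Fin m} {x : X} :
    x ∈ S.otherDiscs i ↔ ∃ j, j ≠ i ∧ x ∈ (S.disc j).carrier := by
  simp [otherDiscs]

theorem isCompact_otherDiscs (i : Fin m) : IsCompact (S.otherDiscs i) :=
  isCompact_iUnion fun _ => S.isCompact_disc _

theorem otherDiscs_subset (i : Fin m) : S.otherDiscs i ⊆ T.carrier :=
  iUnion_subset fun j => (S.disc j).subset

theorem disjoint_otherDiscs (i : Fin m) : Disjoint (S.disc i).carrier (S.otherDiscs i) := by
  refine disjoint_left.2 fun x hx hx' => ?_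
  obtain ⟨j, hj, hxj⟩ := S.mem_otherDiscs.1 hx'
  exact hj (S.eq_of_mem_disc hxj hx)

theorem chamber_mem_nhdsWithin {i : Fin m} {x : X} (hx : x ∈ (S.chamber i).carrier)
    (hxD : ∀ j, x ∉ (S.disc j).carrier) : (S.chamber i).carrier ∈ 𝓝[T.carrier] x := by
  let K : Set X := ⋃ j : {j // j ≠ i}, (S.chamber j).carrier
  have hK : IsCompact K := isCompact_iUnion fun _ => S.isCompact_chamber _
  have hxK : x ∉ K := by
    intro h
    obtain ⟨⟨j, hj⟩, hxj⟩ := mem_iUnion.1 h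
    obtain ⟨k, hk⟩ := mem_iUnion.1 (S.overlap i j (Ne.symm hj) ⟨hx, hxj⟩)
    exact hxD k hk
  filter_upwards [T.compl_mem_nhdsWithin hK (iUnion_subset fun j => S.chamber_sub j)
    (S.chamber_sub i hx) hxK, self_mem_nhdsWithin] with y hyK hyT
  rw [← S.cover] at hyT
  obtain ⟨j, hj⟩ := mem_iUnion.1 hyT
  by_cases hji : j = i
  · exact hji ▸ hj
  · exact absurd (mem_iUnion.2 ⟨⟨j, hji⟩, hj⟩) hyK

theorem isCutOff (i : Fin m) : IsCutOff T (S.chamber i) (S.disc i) (S.otherDiscs i) where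
  subset := S.chamber_sub i
  bot_eq := S.bot_eq i
  top_subset x hx := by
    rw [S.top_eq] at hx
    exact S.mem_otherDiscs.2 ⟨_, S.finRotate_ne i, hx⟩
  isCompact := S.isCompact_otherDiscs i
  subset_torus := S.otherDiscs_subset i
  disjoint := S.disjoint_otherDiscs i
  mem_nhdsWithin x hx hxD hxQ := S.chamber_mem_nhdsWithin hx fun j hj => by
    by_cases hji : j = i
    · exact hxD (hji ▸ hj)
    · exact hxQ (S.mem_otherDiscs.2 ⟨j, hji, hj⟩)

theorem isCutOff_flip (i : Fin m) : IsCutOff T (S.chamber i).flip (S.disc (finRotate m i))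
    (S.otherDiscs (finRotate m i)) where
  subset := S.chamber_sub i
  bot_eq := by rw [Chamber.flip_bot, S.top_eq]
  top_subset x hx := by
    rw [Chamber.flip_top, S.bot_eq] at hx
    exact S.mem_otherDiscs.2 ⟨_, (S.finRotate_ne i).symm, hx⟩
  isCompact := S.isCompact_otherDiscs _
  subset_torus := S.otherDiscs_subset _
  disjoint := S.disjoint_otherDiscs _
  mem_nhdsWithin x hx hxD hxQ := S.chamber_mem_nhdsWithin hx fun j hj => by
    by_cases hji : j = finRotate m i
    · exact hxD (hji ▸ hj)
    · exact hxQ (S.mem_otherDiscs.2 ⟨j, hji, hj⟩)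

/-- The two chambers adjacent to a disc form a neighbourhood of each interior point of it. -/
theorem union_mem_nhdsWithin {i : Fin m} {p : X} (hp : p ∈ (S.disc (finRotate m i)).carrier)
    (hpT : p ∈ T.intr) : (S.chamber i).carrier ∪ (S.chamber (finRotate m i)).carrier ∈
      𝓝[T.carrier] p := by
  set k := finRotate m i with hk
  let A := S.chamber i
  let B := S.chamber k
  let b : ↥Disc2 → X := fun z => setParam B.homeo (z, 0)
  have hb : Continuous b := (continuous_setParam B.homeo).comp (by fun_prop)
  have hbA : ∀ z, b z ∈ A.carrier ∧ (setCoord A.homeo (b z)).2 = 1 := fun z =>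
    S.mem_disc_finRotate.1 (S.mem_disc.2 ⟨setParam_mem _ _, by simp [b, B, k]⟩)
  let a : ↥Disc2 → ↥Disc2 := fun z => (setCoord A.homeo (b z)).1
  have ha : Continuous a := continuous_fst.comp
    ((continuousOn_setCoord A.homeo).comp_continuous hb fun z => (hbA z).1)
  have hab : ∀ z, setParam A.homeo (a z, 1) = b z := fun z => by
    rw [← (hbA z).2]
    exact setParam_setCoord A.homeo (hbA z).1
  have hainj : Function.Injective a := by
    intro z w h
    have h1 : b z = b w := by rw [← hab z, ← hab w, h]
    exact (Prod.ext_iff.1 (setParam_injective _ h1)).1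
  let P : ℝ → unitInterval := projIcc 0 1 zero_le_one
  have hP : Continuous P := continuous_projIcc
  have hPcoe : ∀ t ∈ Icc (0 : ℝ) 1, (P t : ℝ) = t := fun t ht => by
    simp only [P, projIcc_of_mem _ ht]
  let F : ↥Disc2 × ℝ → X := fun q =>
    if 0 ≤ q.2 then setParam B.homeo (q.1, P q.2) else setParam A.homeo (a q.1, P (1 + q.2))
  have hF : Continuous F := by
    refine Continuous.if_le ?_ ?_ continuous_const continuous_snd ?_
    · exact (continuous_setParam B.homeo).comp (by fun_prop)
    · exact (continuous_setParam A.homeo).comp (by fun_prop)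
    · intro q hq
      have h0 : P q.2 = 0 := Subtype.ext (by rw [← hq, hPcoe 0 (by simp)]; rfl)
      have h1 : P (1 + q.2) = 1 := Subtype.ext (by rw [← hq, add_zero, hPcoe 1 (by simp)]; rfl)
      rw [h0, h1, hab]
  have hFmem : ∀ q, F q ∈ A.carrier ∪ B.carrier := by
    intro q
    by_cases h : 0 ≤ q.2
    · simp only [F, if_pos h]
      exact Or.inr (setParam_mem _ _)
    · simp only [F, if_neg h]
      exact Or.inl (setParam_mem _ _)
  have hFT : ∀ q, F q ∈ T.carrier := fun q =>
    (hFmem q).elim (fun h => S.chamber_sub _ h) fun h => S.chamber_sub _ h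
  have hmixed : ∀ q r : ↥Disc2 × ℝ, 0 ≤ q.2 → r.2 < 0 → -1 < r.2 → F q = F r →
      F r ∈ S.otherDiscs k := by
    intro q r hq hr hr' h
    have hqB : F q ∈ B.carrier := by
      simp only [F, if_pos hq]
      exact setParam_mem _ _
    have hrA : F r ∈ A.carrier := by
      simp only [F, if_neg hr.not_ge]
      exact setParam_mem _ _
    obtain ⟨l, hl⟩ := mem_iUnion.1 (S.overlap k i (S.finRotate_ne i) ⟨h ▸ hqB, hrA⟩)
    refine S.mem_otherDiscs.2 ⟨l, ?_, hl⟩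
    rintro rfl
    have h2 := (S.mem_disc_finRotate.1 hl).2
    simp only [F, if_neg hr.not_ge] at h2
    rw [setCoord_setParam] at h2
    have h3 := congrArg Subtype.val h2
    simp only at h3
    rw [hPcoe _ ⟨by linarith, by linarith⟩] at h3
    have h4 : 1 + r.2 = 1 := h3
    linarith
  have hpos : ∀ q r : ↥Disc2 × ℝ, q.2 ∈ Ioo (-1 : ℝ) 1 → r.2 ∈ Ioo (-1 : ℝ) 1 →
      F q ∉ S.otherDiscs k → F q = F r → q = r := by
    intro q r hq hr hqQ h
    by_cases h0 : 0 ≤ q.2 <;> by_cases h0' : 0 ≤ r.2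
    · simp only [F, if_pos h0, if_pos h0'] at h
      have h1 := Prod.ext_iff.1 (setParam_injective _ h)
      refine Prod.ext h1.1 ?_
      rw [← hPcoe q.2 ⟨h0, hq.2.le⟩, ← hPcoe r.2 ⟨h0', hr.2.le⟩]
      exact congrArg Subtype.val h1.2
    · exact absurd (h ▸ hmixed q r h0 (not_le.1 h0') hr.1 h) hqQ
    · exact absurd (hmixed r q h0' (not_le.1 h0) hq.1 h.symm) hqQ
    · simp only [F, if_neg h0, if_neg h0'] at h
      have h1 := Prod.ext_iff.1 (setParam_injective _ h)
      refine Prod.ext (hainj h1.1) ?_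
      have h2 := hPcoe (1 + q.2) ⟨by linarith [hq.1], by linarith⟩
      have h3 := hPcoe (1 + r.2) ⟨by linarith [hr.1], by linarith⟩
      have h4 := congrArg Subtype.val h1.2
      simp only at h4
      linarith
  let f : ℂ × ℝ → X := fun y => F (Disc2.mk' y.1, y.2)
  let V : Set (ℂ × ℝ) := Metric.ball 0 1 ×ˢ Ioo (-1) 1
  have hV : IsOpen V := Metric.isOpen_ball.prod isOpen_Ioo
  have hmkc : ContinuousOn (fun y : ℂ × ℝ => ((Disc2.mk' y.1, y.2) : ↥Disc2 × ℝ)) V := by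
    refine ContinuousOn.prodMk (Disc2.continuousOn_mk'.comp continuousOn_fst ?_) continuousOn_snd
    exact fun y hy => Metric.ball_subset_closedBall hy.1
  have hfc : ContinuousOn f V := hF.comp_continuousOn hmkc
  let f' : ℂ × ℝ → ↥T.carrier := fun y => ⟨f y, hFT _⟩
  have hf'c : ContinuousOn f' V := IsInducing.subtypeVal.continuousOn_iff.2 hfc
  let U : Set (ℂ × ℝ) := V ∩ f' ⁻¹' ((↑) ⁻¹' S.otherDiscs k)ᶜ
  have hU : IsOpen U := hf'c.isOpen_inter_preimage hV
    (T.isClosed_preimage_val (S.isCompact_otherDiscs k) (S.otherDiscs_subset k)).isOpen_compl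
  obtain ⟨hpB, hp0⟩ := S.mem_disc.1 hp
  let x : ℂ × ℝ := ((setCoord B.homeo p).1, 0)
  have hfx : f x = p := by
    simp only [f, F, x, le_refl, if_true, Disc2.mk'_coe]
    have h0 : P 0 = 0 := Subtype.ext (by rw [hPcoe 0 (by simp)]; rfl)
    rw [h0, ← hp0]
    exact setParam_setCoord B.homeo hpB
  have hxU : x ∈ U := by
    refine ⟨⟨?_, by simp [x]⟩, ?_⟩
    · refine mem_ball_zero_iff.2 (lt_of_le_of_ne (Disc2.norm_le _) ?_)
      exact (S.isCutOff k).norm_ne_one_of_mem_disc hp hpT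
    · intro h
      have h1 : f x ∈ S.otherDiscs k := h
      rw [hfx] at h1
      exact disjoint_left.1 (S.disjoint_otherDiscs k) hp h1
  have hn := T.image_mem_nhdsWithin (F := ℂ × ℝ) (f := f) (by simp) hU hxU (hfx.symm ▸ hpT)
    (fun y _ => hFT _) (hfc.mono inter_subset_left) (by
      intro y hy z hz h
      have h1 := Prod.ext_iff.1 (hpos _ _ hy.1.2 hz.1.2 hy.2 h)
      refine Prod.ext ?_ h1.2
      exact injOn_setCoord (Homeomorph.refl ↥Disc2) (Metric.ball_subset_closedBall hy.1.1)
        (Metric.ball_subset_closedBall hz.1.1) h1.1)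
  rw [hfx] at hn
  refine Filter.mem_of_superset hn ?_
  rintro _ ⟨y, -, rfl⟩
  exact hFmem _

end ChamberSystem

theorem Disc2.isPreconnected_circle : IsPreconnected {z : ↥Disc2 | ‖(z : ℂ)‖ = 1} := by
  rw [← IsInducing.subtypeVal.isPreconnected_image]
  have h : Subtype.val '' {z : ↥Disc2 | ‖(z : ℂ)‖ = 1} = Metric.sphere (0 : ℂ) 1 := by
    ext z
    constructor
    · rintro ⟨w, hw, rfl⟩
      exact mem_sphere_zero_iff_norm.2 hw
    · intro hz
      exact ⟨⟨z, Metric.sphere_subset_closedBall hz⟩, mem_sphere_zero_iff_norm.1 hz, rfl⟩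
  rw [h]
  exact isPreconnected_sphere (by simp [Complex.rank_real_complex]) 0 1

theorem Disc2.image_val_openDisc :
    Subtype.val '' {z : ↥Disc2 | ‖(z : ℂ)‖ < 1} = Metric.ball (0 : ℂ) 1 := by
  ext z
  constructor
  · rintro ⟨w, hw, rfl⟩
    exact mem_ball_zero_iff.2 hw
  · intro hz
    exact ⟨⟨z, Metric.ball_subset_closedBall hz⟩, mem_ball_zero_iff.1 hz, rfl⟩

theorem Disc2.isPreconnected_openDisc : IsPreconnected {z : ↥Disc2 | ‖(z : ℂ)‖ < 1} := by
  rw [← IsInducing.subtypeVal.isPreconnected_image, Disc2.image_val_openDisc]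
  exact (convex_ball 0 1).isPreconnected

theorem Disc2.dense_openDisc : Dense {z : ↥Disc2 | ‖(z : ℂ)‖ < 1} := by
  intro z
  rw [closure_subtype, Disc2.image_val_openDisc, closure_ball _ one_ne_zero]
  exact z.2

/-- Lemma 4.3 (replacement disc lemma): in the setup, assume
`N(L ∩ Cᵢ, Cᵢ) ≥ n` for each `i`. Let `D′` be an embedded disc in the interior
of `T` with `D′ ∩ (⋃ᵢ Dᵢ) = ∂D′`. Then `∂D′` lies in some `Dᵢ`, and for the
subdisc `D″` of `Dᵢ` bounded by `∂D′` we have `|L ∩ D′| ≥ |L ∩ D″|`. -/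
theorem replacement_disc_lemma {X : Type} [TopologicalSpace X]
    (T : SolidTorus X) (L : Set X) (hL : IsLink L) (hLint : L ⊆ T.intr)
    (m : ℕ) (S : ChamberSystem T m) (n : ℕ)
    (htrans : S.Transversal L n)
    (hcham : ∀ i, (n : ℕ∞) ≤ chamberIndex (L ∩ (S.chamber i).carrier) (S.chamber i))
    (D' : Set X) (hD'sub : D' ⊆ T.intr) (eD' : ↥D' ≃ₜ ↥Disc2)
    (bd : Set X) (hbd : bd = Subtype.val '' (eD' ⁻¹' {p | ‖(p : ℂ)‖ = 1}))
    (hmeet : D' ∩ (⋃ i, (S.disc i).carrier) = bd) :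
    ∃ i, bd ⊆ (S.disc i).carrier ∧
      ∀ (D'' : Set X) (eD'' : ↥D'' ≃ₜ ↥Disc2), D'' ⊆ (S.disc i).carrier →
        Subtype.val '' (eD'' ⁻¹' {p | ‖(p : ℂ)‖ = 1}) = bd →
        (L ∩ D'').encard ≤ (L ∩ D').encard := by
  have hmem : ∀ z, setParam eD' z ∈ T.carrier := fun z =>
    T.intr_subset (hD'sub (setParam_mem _ z))
  let q : ↥Disc2 → ↥T.carrier := fun z => ⟨setParam eD' z, hmem z⟩
  have hq : Continuous q := (continuous_setParam eD').subtype_mk _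
  have hclosed : ∀ K : Set X, IsCompact K → K ⊆ T.carrier →
      IsClosed {z | setParam eD' z ∈ K} := fun K hK hKT =>
    (T.isClosed_preimage_val hK hKT).preimage hq
  have hdisc : ∀ z, (∃ k, setParam eD' z ∈ (S.disc k).carrier) ↔ ‖(z : ℂ)‖ = 1 := by
    intro z
    have h1 : setParam eD' z ∈ bd ↔ ‖(z : ℂ)‖ = 1 := by
      rw [hbd, mem_image_val_preimage, setCoord_setParam]
      exact and_iff_right (setParam_mem _ _)
    rw [← h1, ← hmeet, mem_inter_iff, mem_iUnion]
    exact (and_iff_right (setParam_mem _ _)).symm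
  obtain ⟨i, hi⟩ := Disc2.isPreconnected_circle.exists_subset_of_finite_closed_cover
    ⟨⟨1, by simp⟩, by simp⟩ (F := fun k => {z | setParam eD' z ∈ (S.disc k).carrier})
    (fun k => hclosed _ (S.isCompact_disc k) (S.disc k).subset)
    (fun z hz => mem_iUnion.2 ((hdisc z).2 hz))
    (fun k l hkl => eq_empty_iff_forall_notMem.2 fun z hz =>
      hkl (S.eq_of_mem_disc hz.2.1 hz.2.2))
  obtain ⟨j, hj⟩ := Disc2.isPreconnected_openDisc.exists_subset_of_finite_closed_cover
    ⟨⟨0, by simp⟩, by simp⟩ (F := fun k => {z | setParam eD' z ∈ (S.chamber k).carrier})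
    (fun k => hclosed _ (S.isCompact_chamber k) (S.chamber_sub k))
    (fun z _ => by
      obtain ⟨k, hk⟩ := mem_iUnion.1 (S.cover.symm ▸ hmem z)
      exact mem_iUnion.2 ⟨k, hk⟩)
    (fun k l hkl => eq_empty_iff_forall_notMem.2 fun z hz =>
      (mem_ofPred.1 hz.1).ne ((hdisc z).1 (mem_iUnion.1 (S.overlap k l hkl hz.2))))
  have hbdi : bd ⊆ (S.disc i).carrier := by
    intro x hx
    rw [hbd, mem_image_val_preimage] at hx
    have := hi hx.2
    rwa [mem_ofPred, setParam_setCoord eD' hx.1] at this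
  have hD'C : D' ⊆ (S.chamber j).carrier := by
    intro x hx
    have h1 : setCoord eD' x ∈ {z | setParam eD' z ∈ (S.chamber j).carrier} :=
      closure_minimal hj (hclosed _ (S.isCompact_chamber j) (S.chamber_sub j))
        (Disc2.dense_openDisc _)
    rwa [mem_ofPred, setParam_setCoord eD' hx] at h1
  have hD'Q : Disjoint D' (S.otherDiscs i) := by
    refine disjoint_left.2 fun x hx hxQ => ?_
    obtain ⟨k, hk, hxk⟩ := S.mem_otherDiscs.1 hxQ
    have hxb : x ∈ bd := hmeet ▸ ⟨hx, mem_iUnion.2 ⟨k, hxk⟩⟩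
    exact hk (S.eq_of_mem_disc hxk (hbdi hxb))
  have hD'D : D' ∩ (S.disc i).carrier = Subtype.val '' (eD' ⁻¹' {p | ‖(p : ℂ)‖ = 1}) := by
    rw [← hbd]
    refine Subset.antisymm ?_ fun x hx => ⟨?_, hbdi hx⟩
    · rw [← hmeet]
      exact inter_subset_inter_right _ (subset_iUnion_of_subset i Subset.rfl)
    · rw [← hmeet] at hx
      exact hx.1
  refine ⟨i, hbdi, fun D'' eD'' hD'' hbd'' => ?_⟩
  have hbd2 := hbd''.trans hbd
  by_cases hij : i = j
  · subst hij
    exact (S.isCutOff i).encard_le hL.isCompact hLint (htrans i).2 (htrans i).1 (hcham i) eD'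
      hD'C hD'sub hD'Q hD'D eD'' hD'' hbd2
  obtain ⟨k, rfl⟩ := (finRotate m).surjective i
  by_cases hkj : k = j
  · subst hkj
    exact (S.isCutOff_flip k).encard_le hL.isCompact hLint (htrans _).2 (htrans _).1
      ((hcham k).trans (Chamber.chamberIndex_le_flip _ _)) eD' hD'C hD'sub hD'Q hD'D eD'' hD'' hbd2
  exfalso
  let z₁ : ↥Disc2 := ⟨1, by simp⟩
  have hz₁ : setParam eD' z₁ ∈ (S.disc (finRotate m k)).carrier := hi (by simp [z₁])
  have hN := S.union_mem_nhdsWithin hz₁ (hD'sub (setParam_mem _ _))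
  have hN' := hq.continuousAt.preimage_mem_nhds
    ((preimage_coe_mem_nhds_subtype (a := q z₁)).2 hN)
  obtain ⟨z, hzN, hz⟩ := Disc2.dense_openDisc.inter_nhds_nonempty hN'
  have hzj := hD'C (setParam_mem eD' z)
  refine (mem_ofPred.1 hzN).ne ((hdisc z).1 (mem_iUnion.1 ?_))
  rcases hz with hz | hz
  · exact S.overlap k j hkj ⟨hz, hzj⟩
  · exact S.overlap _ j hij ⟨hz, hzj⟩
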